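/- $\sum_{n=0}^{\infty} \frac{\binom{2n}{n}}{(2n+1)^3\,16^n}\left(9 H_{2n+1} + \frac{32}{2n+1}\right) = 40\,\beta(4) + \frac{5\pi\,\zeta(3)}{12}$. -/

import Mathlib

open Filter Topology

/-- Harmonic number `H_n = ∑_{k=1}^n 1/k`. -/
noncomputable def H (n : ℕ) : ℝ := ∑ k ∈ Finset.range n, 1 / ((k:ℝ) + 1)

/-- The Dirichlet beta function `β(s) = ∑_{k ≥ 0} (-1)^k/(2k+1)^s`. -/
noncomputable def dirichletBeta (s : ℕ) : ℝ := ∑' k : ℕ, (-1:ℝ)^k / (2*(k:ℝ)+1)^s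

/-- The Riemann zeta value `ζ(s) = ∑_{n ≥ 1} 1/n^s`. -/
noncomputable def zeta (s : ℕ) : ℝ := ∑' n : ℕ, 1 / ((n:ℝ) + 1) ^ s

/-!
Multiplying the terms of a polylogarithm by truncated exponentials in `log r`, where
`z = r e ^ (i δ)`, turns `Liₙ` into a function of `(r, δ)` that continues past the unit circle by
inversion. Along a curve on which `arg (1 - z)` is affine in the parameter, the derivative of its
weight `n` version is elementary: a power of `log r` times `log |1 - z|` or times a constant, plus
a multiple of the weight `n - 1` version. Comparing derivatives therefore expresses the
antiderivatives of `log ^ 3 (2 sin θ)` and `log ^ 3 (tan θ)` by such functions, and brings in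
`β(4)` and `ζ(3)`; a triplication identity along the curve `r = 2 sin ψ` evaluates the log-tangent
integral at `π / 12` and `π / 6` up to log-sine integrals and a weight `4` value at `e ^ (i π / 3)`.

The same regularisation, applied on the segment `z = 2 sin θ` to the generating functions of
`C(2n, n) / 4 ^ n` and `C(2n, n) H_{2n} / 4 ^ n`, exhibits the series as the value at `θ = π / 6` of
a function of `θ` whose derivative is `log ^ 2 (2 sin θ)` times a linear form in logarithms of
trigonometric functions. That product is a rational combination of cubes of `log (2 sin φ)` and
`log (tan φ)` with `φ` affine in `θ`, so the series is a combination of the integrals above, in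
which everything but `β(4)` and `π ζ(3)` cancels.
-/

section

open Set

theorem eq_of_hasDerivAt_zero_off_countable {E : Type*} [NormedAddCommGroup E]
    [NormedSpace ℝ E] [CompleteSpace E] {f : ℝ → E} {a b : ℝ} {c : E} {s : Set ℝ}
    (hs : s.Countable) (ha : f a = c) (hc : ContinuousOn f (Icc a b))
    (hd : ∀ y ∈ Ioo a b \ s, HasDerivAt f 0 y) : ∀ x ∈ Icc a b, f x = c := fun x hx => by
  have hsub : Icc a x ⊆ Icc a b := Icc_subset_Icc_right hx.2
  have h := MeasureTheory.integral_eq_of_hasDerivAt_off_countable_of_le f (fun _ => 0) hx.1 hs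
    (hc.mono hsub) (fun y hy => hd y ⟨⟨hy.1.1, hy.1.2.trans_le hx.2⟩, hy.2⟩) (by simp)
  simpa [sub_eq_zero, eq_comm, ha] using h

/-! ### Polylogarithmic series -/

theorem norm_natCast_add_one_pow (k n : ℕ) : ‖((k : ℂ) + 1) ^ n‖ = ((k : ℝ) + 1) ^ n := by
  rw [norm_pow]
  congr 1
  exact_mod_cast Complex.norm_natCast (k + 1)

theorem summable_one_div_nat_add_one_pow {n : ℕ} (hn : 2 ≤ n) :
    Summable fun k : ℕ => 1 / ((k : ℝ) + 1) ^ n := by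
  simpa using (summable_nat_add_iff 1).2 (Real.summable_one_div_nat_pow.2 hn)

/-- The polylogarithmic series `∑ b_{k-1} z ^ k / k ^ n`, twisted by a coefficient sequence `b`;
for `b = 1` it is the polylogarithm `Liₙ`. -/
noncomputable def polylogSeries (b : ℕ → ℂ) (n : ℕ) (z : ℂ) : ℂ :=
  ∑' k : ℕ, b k * z ^ (k + 1) / ((k : ℂ) + 1) ^ n

section polylogSeries

variable {b : ℕ → ℂ} {z : ℂ}

theorem norm_polylogSeries_term_le (hb : ∀ k, ‖b k‖ ≤ 1) (n k : ℕ) :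
    ‖b k * z ^ (k + 1) / ((k : ℂ) + 1) ^ n‖ ≤ ‖z‖ ^ (k + 1) := by
  have hk : (1 : ℝ) ≤ ((k : ℝ) + 1) ^ n := one_le_pow₀ (by linarith [k.cast_nonneg (α := ℝ)])
  rw [norm_div, norm_mul, norm_natCast_add_one_pow, norm_pow, div_le_iff₀ (by positivity)]
  calc ‖b k‖ * ‖z‖ ^ (k + 1) ≤ 1 * ‖z‖ ^ (k + 1) := by gcongr; exact hb k
    _ = ‖z‖ ^ (k + 1) * 1 := mul_comm _ _
    _ ≤ ‖z‖ ^ (k + 1) * ((k : ℝ) + 1) ^ n := by gcongr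

theorem summable_polylogSeries (hb : ∀ k, ‖b k‖ ≤ 1) (n : ℕ) (hz : ‖z‖ < 1) :
    Summable fun k : ℕ => b k * z ^ (k + 1) / ((k : ℂ) + 1) ^ n :=
  .of_norm_bounded ((summable_nat_add_iff 1).2 (summable_geometric_of_lt_one (norm_nonneg z) hz))
    (norm_polylogSeries_term_le hb n)

theorem polylogSeries_one_zero (hz : ‖z‖ < 1) : polylogSeries 1 0 z = z / (1 - z) := by
  simp only [polylogSeries, Pi.one_apply, one_mul, pow_zero, div_one, pow_succ']
  rw [tsum_mul_left, tsum_geometric_of_norm_lt_one hz, div_eq_mul_inv]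

theorem polylogSeries_one_one (hz : ‖z‖ < 1) : polylogSeries 1 1 z = -Complex.log (1 - z) := by
  simpa [polylogSeries] using (Complex.hasSum_taylorSeries_neg_log' hz).tsum_eq

theorem hasDerivAt_polylogSeries (hb : ∀ k, ‖b k‖ ≤ 1) (n : ℕ) (hz : ‖z‖ < 1) (hz0 : z ≠ 0) :
    HasDerivAt (polylogSeries b (n + 1)) (polylogSeries b n z / z) z := by
  obtain ⟨ρ, hzρ, hρ⟩ := exists_between hz
  have hρ0 : 0 ≤ ρ := (norm_nonneg z).trans hzρ.le
  have hzmem : z ∈ Metric.ball (0 : ℂ) ρ := by simpa using hzρ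
  have hder : HasDerivAt (polylogSeries b (n + 1))
      (∑' k : ℕ, b k * z ^ k / ((k : ℂ) + 1) ^ n) z := by
    refine hasDerivAt_tsum_of_isPreconnected (summable_geometric_of_lt_one hρ0 hρ)
      Metric.isOpen_ball (convex_ball (0 : ℂ) ρ).isPreconnected
      (g' := fun k y => b k * y ^ k / ((k : ℂ) + 1) ^ n) (fun k y _ => ?_) (fun k y hy => ?_)
      hzmem (summable_polylogSeries hb _ hz) hzmem
    · refine (((hasDerivAt_pow (k + 1) y).const_mul (b k)).div_const _).congr_deriv ?_
      have := Nat.cast_add_one_ne_zero (R := ℂ) k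
      push_cast
      field_simp
      ring
    · have hk : (1 : ℝ) ≤ ((k : ℝ) + 1) ^ n := one_le_pow₀ (by linarith [k.cast_nonneg (α := ℝ)])
      rw [norm_div, norm_mul, norm_natCast_add_one_pow, norm_pow]
      refine (div_le_self (by positivity) hk).trans ?_
      have hy' : ‖y‖ ≤ ρ := (mem_ball_zero_iff.1 hy).le
      calc ‖b k‖ * ‖y‖ ^ k ≤ 1 * ρ ^ k := by gcongr; exact hb k
        _ = ρ ^ k := one_mul _
  refine hder.congr_deriv ?_
  rw [polylogSeries, ← tsum_div_const]
  refine tsum_congr fun k => ?_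
  rw [pow_succ]
  field_simp

end polylogSeries

/-! ### Logarithmic weights -/

/-- The weight `s * ∑_{j < n} (-log s) ^ j / j!` on `[0, 1]`, with value `0` at `s = 0` through
the convention `log 0 = 0`. -/
noncomputable def polylogWeight (n : ℕ) (s : ℝ) : ℝ :=
  s * ∑ j ∈ Finset.range n, (-Real.log s) ^ j / (j.factorial : ℝ)

theorem polylogWeight_zero_right (n : ℕ) : polylogWeight n 0 = 0 := by simp [polylogWeight]

theorem polylogWeight_succ_one (n : ℕ) : polylogWeight (n + 1) 1 = 1 := by
  simp [polylogWeight, Finset.sum_range_succ']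

theorem abs_polylogWeight_le_one (n : ℕ) {s : ℝ} (hs : s ∈ Icc (0 : ℝ) 1) :
    |polylogWeight n s| ≤ 1 := by
  rcases hs.1.eq_or_lt with rfl | hs0
  · simp [polylogWeight_zero_right]
  have hlog : 0 ≤ -Real.log s := neg_nonneg.2 (Real.log_nonpos hs.1 hs.2)
  rw [polylogWeight, abs_of_nonneg (mul_nonneg hs.1 (Finset.sum_nonneg fun j _ => by positivity))]
  calc s * ∑ j ∈ Finset.range n, (-Real.log s) ^ j / (j.factorial : ℝ)
      ≤ s * Real.exp (-Real.log s) := by gcongr; exact Real.sum_le_exp_of_nonneg hlog n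
    _ = 1 := by rw [Real.exp_neg, Real.exp_log hs0, mul_inv_cancel₀ hs0.ne']

theorem continuousOn_polylogWeight (n : ℕ) : ContinuousOn (polylogWeight n) (Ici 0) := by
  intro s hs
  rcases (mem_Ici.1 hs).eq_or_lt with rfl | hs0
  · rw [← continuousWithinAt_Ioi_iff_Ici, ContinuousWithinAt, polylogWeight_zero_right]
    have hterm (j : ℕ) : Tendsto (fun s => s * ((-Real.log s) ^ j / (j.factorial : ℝ)))
        (𝓝[>] 0) (𝓝 0) := by
      have hlog : Tendsto (fun s => -Real.log s) (𝓝[>] 0) atTop :=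
        tendsto_neg_atBot_atTop.comp Real.tendsto_log_nhdsGT_zero
      have h := ((Real.tendsto_pow_mul_exp_neg_atTop_nhds_zero j).comp hlog).div_const
        (j.factorial : ℝ)
      rw [zero_div] at h
      refine h.congr' ?_
      filter_upwards [self_mem_nhdsWithin] with s hs
      simp only [Function.comp_apply, neg_neg, Real.exp_log hs]
      ring
    have hsum := tendsto_finsetSum (Finset.range n) fun j _ => hterm j
    simp only [← Finset.mul_sum, Finset.sum_const_zero] at hsum
    exact hsum
  · have hlog : ContinuousAt Real.log s := Real.continuousAt_log hs0.ne'
    have hs : ContinuousAt (polylogWeight n) s := by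
      unfold polylogWeight
      fun_prop
    exact hs.continuousWithinAt

/-! ### Regularised polylogarithms in polar coordinates -/

/-- `∑ b_{k-1} wₙ(r ^ k) e ^ (i k δ) / k ^ n`, where `wₙ` is `polylogWeight n`. For `0 < r ≤ 1`
it is the combination `∑_{j < n} (-log r) ^ j / j! * Li_{n-j}` at `z = r e ^ (i δ)`. -/
noncomputable def regPolylog (b : ℕ → ℂ) (n : ℕ) (r δ : ℝ) : ℂ :=
  ∑' k : ℕ, b k * polylogWeight n (r ^ (k + 1)) * Complex.exp (δ * Complex.I) ^ (k + 1) /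
    ((k : ℂ) + 1) ^ n

theorem norm_ofReal_mul_exp_mul_I {r : ℝ} (hr : 0 ≤ r) (δ : ℝ) :
    ‖(r : ℂ) * Complex.exp (δ * Complex.I)‖ = r := by
  rw [norm_mul, Complex.norm_exp_ofReal_mul_I, mul_one, Complex.norm_of_nonneg hr]

section regPolylog

variable {b : ℕ → ℂ} {n : ℕ} {r δ : ℝ}

theorem regPolylog_zero_left : regPolylog b n 0 δ = 0 := by
  simp [regPolylog, polylogWeight_zero_right]

theorem norm_regPolylog_term_le (hb : ∀ k, ‖b k‖ ≤ 1) (hr : r ∈ Icc (0 : ℝ) 1) (k : ℕ) :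
    ‖b k * polylogWeight n (r ^ (k + 1)) * Complex.exp (δ * Complex.I) ^ (k + 1) /
      ((k : ℂ) + 1) ^ n‖ ≤ 1 / ((k : ℝ) + 1) ^ n := by
  rw [norm_div, norm_natCast_add_one_pow, norm_mul, norm_pow, Complex.norm_exp_ofReal_mul_I,
    one_pow, mul_one, norm_mul, Complex.norm_real, Real.norm_eq_abs]
  gcongr
  exact mul_le_one₀ (hb k) (abs_nonneg _)
    (abs_polylogWeight_le_one n ⟨pow_nonneg hr.1 _, pow_le_one₀ hr.1 hr.2⟩)

theorem summable_regPolylog (hb : ∀ k, ‖b k‖ ≤ 1) (hn : 2 ≤ n) (hr : r ∈ Icc (0 : ℝ) 1) :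
    Summable fun k : ℕ => b k * polylogWeight n (r ^ (k + 1)) *
      Complex.exp (δ * Complex.I) ^ (k + 1) / ((k : ℂ) + 1) ^ n :=
  .of_norm_bounded (summable_one_div_nat_add_one_pow hn) (norm_regPolylog_term_le hb hr)

theorem continuousOn_regPolylog (hb : ∀ k, ‖b k‖ ≤ 1) (hn : 2 ≤ n) :
    ContinuousOn (fun p : ℝ × ℝ => regPolylog b n p.1 p.2) (Icc 0 1 ×ˢ univ) := by
  refine continuousOn_tsum (fun k => ?_) (summable_one_div_nat_add_one_pow hn)
    fun k p hp => norm_regPolylog_term_le hb hp.1 k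
  have hw : ContinuousOn (fun p : ℝ × ℝ => polylogWeight n (p.1 ^ (k + 1))) (Icc 0 1 ×ˢ univ) :=
    (continuousOn_polylogWeight n).comp (by fun_prop) fun p hp => pow_nonneg hp.1.1 _
  exact ((continuousOn_const.mul (Complex.continuous_ofReal.comp_continuousOn hw)).mul
    (by fun_prop)).div_const _

theorem regPolylog_eq_sum (hb : ∀ k, ‖b k‖ ≤ 1) (hr : r ∈ Ioo (0 : ℝ) 1) :
    regPolylog b n r δ = ∑ j ∈ Finset.range n, (-Real.log r : ℂ) ^ j / (j.factorial : ℂ) *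
      polylogSeries b (n - j) (r * Complex.exp (δ * Complex.I)) := by
  have hz : ‖(r : ℂ) * Complex.exp (δ * Complex.I)‖ < 1 := by
    rw [norm_ofReal_mul_exp_mul_I hr.1.le]; exact hr.2
  simp only [polylogSeries, ← tsum_mul_left]
  rw [← Summable.tsum_finsetSum fun j _ => (summable_polylogSeries hb (n - j) hz).mul_left _]
  refine tsum_congr fun k => ?_
  have hk := Nat.cast_add_one_ne_zero (R := ℂ) k
  simp only [polylogWeight, Real.log_pow]
  push_cast
  rw [Finset.mul_sum, Finset.mul_sum, Finset.sum_mul, Finset.sum_div]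
  refine Finset.sum_congr rfl fun j hj => ?_
  rw [← Nat.sub_add_cancel (Finset.mem_range.1 hj).le, pow_add ((k : ℂ) + 1),
    Nat.sub_add_cancel (Finset.mem_range.1 hj).le, mul_pow (r : ℂ), ← mul_neg, mul_pow _ _ j]
  field_simp

end regPolylog

/-- All terms telescope except the one in which no factor `x` is left to differentiate. -/
theorem hasDerivAt_sum_pow_div_factorial_mul {x : ℝ → ℂ} {L : ℕ → ℝ → ℂ} {x' ν : ℂ} {t : ℝ}
    (hx : HasDerivAt x x' t) (hL : ∀ k, HasDerivAt (L (k + 1)) (ν * L k t) t) (n : ℕ) :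
    HasDerivAt
      (fun s => ∑ j ∈ Finset.range (n + 1), x s ^ j / (j.factorial : ℂ) * L (n + 1 - j) s)
      ((ν + x') * ∑ j ∈ Finset.range n, x t ^ j / (j.factorial : ℂ) * L (n - j) t +
        x t ^ n / (n.factorial : ℂ) * (ν * L 0 t)) t := by
  have hterm (j : ℕ) (hj : j ∈ Finset.range (n + 1)) :
      HasDerivAt (fun s => x s ^ j / (j.factorial : ℂ) * L (n + 1 - j) s)
        (j * x t ^ (j - 1) * x' / (j.factorial : ℂ) * L (n + 1 - j) t +
          x t ^ j / (j.factorial : ℂ) * (ν * L (n - j) t)) t := by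
    rw [Nat.succ_sub (Nat.lt_succ_iff.1 (Finset.mem_range.1 hj))]
    exact ((hx.fun_pow j).div_const _).mul (hL (n - j))
  have hshift (j : ℕ) : ((j + 1 : ℕ) : ℂ) * x t ^ (j + 1 - 1) * x' / ((j + 1).factorial : ℂ) *
      L (n + 1 - (j + 1)) t = x' * (x t ^ j / (j.factorial : ℂ) * L (n - j) t) := by
    have hj : ((j : ℂ) + 1) ≠ 0 := Nat.cast_add_one_ne_zero j
    rw [Nat.factorial_succ, Nat.add_sub_cancel, Nat.add_sub_add_right]
    push_cast
    field_simp
  refine (HasDerivAt.fun_sum hterm).congr_deriv ?_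
  rw [Finset.sum_add_distrib, Finset.sum_range_succ', Finset.sum_range_succ _ n,
    Finset.sum_congr rfl fun j _ => hshift j, ← Finset.mul_sum, add_mul, Finset.mul_sum _ _ ν,
    Nat.sub_self]
  simp only [Nat.cast_zero, zero_mul, zero_div, add_zero, mul_left_comm ν]
  ring

theorem hasDerivAt_ofReal_mul_exp_mul_I {ρ α : ℝ → ℝ} {ρ' m t : ℝ} (hρ : HasDerivAt ρ ρ' t)
    (hα : HasDerivAt α m t) (hρt : ρ t ≠ 0) :
    HasDerivAt (fun s => (ρ s : ℂ) * Complex.exp (α s * Complex.I))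
      ((ρ' / ρ t + m * Complex.I) * (ρ t * Complex.exp (α t * Complex.I))) t := by
  have hρ0 : (ρ t : ℂ) ≠ 0 := Complex.ofReal_ne_zero.2 hρt
  refine (hρ.ofReal_comp.mul (hα.ofReal_comp.mul_const Complex.I).cexp).congr_deriv ?_
  field_simp

theorem hasDerivAt_regPolylog {b : ℕ → ℂ} (hb : ∀ k, ‖b k‖ ≤ 1) (n : ℕ) {ρ α : ℝ → ℝ}
    {ρ' m t : ℝ} (hρ : HasDerivAt ρ ρ' t) (hα : HasDerivAt α m t)
    (hρt : ρ t ∈ Ioo (0 : ℝ) 1) :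
    HasDerivAt (fun s => regPolylog b (n + 1) (ρ s) (α s))
      (m * Complex.I * regPolylog b n (ρ t) (α t) +
        (-Real.log (ρ t) : ℂ) ^ n / (n.factorial : ℂ) * ((ρ' / ρ t + m * Complex.I) *
          polylogSeries b 0 (ρ t * Complex.exp (α t * Complex.I)))) t := by
  have hz := hasDerivAt_ofReal_mul_exp_mul_I hρ hα hρt.1.ne'
  have hz0 : (ρ t : ℂ) * Complex.exp (α t * Complex.I) ≠ 0 :=
    mul_ne_zero (Complex.ofReal_ne_zero.2 hρt.1.ne') (Complex.exp_ne_zero _)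
  have hz1 : ‖(ρ t : ℂ) * Complex.exp (α t * Complex.I)‖ < 1 := by
    rw [norm_ofReal_mul_exp_mul_I hρt.1.le]; exact hρt.2
  have hlog : HasDerivAt (fun s => (-Real.log (ρ s) : ℂ)) (-(ρ' / ρ t)) t := by
    simpa using (hρ.log hρt.1.ne').ofReal_comp.fun_neg
  have hLi (k : ℕ) : HasDerivAt
      (fun s => polylogSeries b (k + 1) (ρ s * Complex.exp (α s * Complex.I)))
      ((ρ' / ρ t + m * Complex.I) * polylogSeries b k (ρ t * Complex.exp (α t * Complex.I))) t := by
    refine ((hasDerivAt_polylogSeries hb k hz1 hz0).comp t hz).congr_deriv ?_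
    rw [mul_left_comm, div_mul_cancel₀ _ hz0]
  have hsum := hasDerivAt_sum_pow_div_factorial_mul
    (L := fun k s => polylogSeries b k (ρ s * Complex.exp (α s * Complex.I))) hlog hLi n
  have hev : (fun s => regPolylog b (n + 1) (ρ s) (α s)) =ᶠ[𝓝 t] fun s =>
      ∑ j ∈ Finset.range (n + 1), (-Real.log (ρ s) : ℂ) ^ j / (j.factorial : ℂ) *
        polylogSeries b (n + 1 - j) (ρ s * Complex.exp (α s * Complex.I)) := by
    filter_upwards [hρ.continuousAt.eventually_mem (isOpen_Ioo.mem_nhds hρt)] with s hs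
    exact regPolylog_eq_sum hb hs
  refine (hsum.congr_of_eventuallyEq hev).congr_deriv ?_
  rw [regPolylog_eq_sum hb hρt, add_neg_cancel_comm]

section regPolylogOne

variable {n : ℕ} {r δ : ℝ}

theorem exp_ofReal_add_two_pi_mul_div_mul_I (δ : ℝ) (d j : ℕ) :
    Complex.exp (((δ + 2 * Real.pi * j / d : ℝ) : ℂ) * Complex.I) =
      Complex.exp (δ * Complex.I) * Complex.exp (2 * Real.pi * Complex.I / d) ^ j := by
  rw [← Complex.exp_nat_mul, ← Complex.exp_add]
  congr 1
  push_cast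
  ring

theorem sum_pow_exp_pow {d : ℕ} (hd : d ≠ 0) (k : ℕ) :
    ∑ j ∈ Finset.range d, (Complex.exp (2 * Real.pi * Complex.I / d) ^ j) ^ k =
      if d ∣ k then (d : ℂ) else 0 := by
  have hω := Complex.isPrimitiveRoot_exp d hd
  simp only [pow_right_comm _ _ k]
  split_ifs with hk
  · simp [(hω.pow_eq_one_iff_dvd k).2 hk]
  · have hne := mt (hω.pow_eq_one_iff_dvd k).1 hk
    rw [geom_sum_eq hne, pow_right_comm, hω.pow_eq_one, one_pow, sub_self, zero_div]

theorem tsum_ite_dvd_add_one {E : Type*} [AddCommMonoid E] [TopologicalSpace E] [T2Space E]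
    (f : ℕ → E) {d : ℕ} (hd : d ≠ 0) :
    ∑' k, (if d ∣ k + 1 then f (k + 1) else 0) = ∑' q, f (d * (q + 1)) := by
  have hsub (q : ℕ) : d * (q + 1) - 1 + 1 = d * (q + 1) :=
    Nat.sub_add_cancel (Nat.mul_pos (Nat.pos_of_ne_zero hd) q.succ_pos)
  have hinj : Function.Injective fun q : ℕ => d * (q + 1) - 1 := fun p q hpq => by
    have := congrArg (· + 1) hpq
    simp only [hsub] at this
    simpa using Nat.eq_of_mul_eq_mul_left (Nat.pos_of_ne_zero hd) this
  rw [← hinj.tsum_eq]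
  · simp only [hsub, dvd_mul_right, if_true]
  · intro k hk
    obtain ⟨c, hc⟩ : d ∣ k + 1 := by_contra fun h => hk (if_neg h)
    obtain ⟨q, rfl⟩ : ∃ q, c = q + 1 := Nat.exists_eq_succ_of_ne_zero (by rintro rfl; simp at hc)
    exact ⟨q, by simp only [← hc, Nat.add_sub_cancel]⟩

/-- Distribution relation: averaging over the `d`-th roots of unity keeps the multiples of `d`. -/
theorem sum_regPolylog_add_two_pi_mul_div (hn : 2 ≤ n) (hr : r ∈ Icc (0 : ℝ) 1) {d : ℕ}
    (hd : d ≠ 0) :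
    (d : ℂ) ^ n * ∑ j ∈ Finset.range d, regPolylog 1 n r (δ + 2 * Real.pi * j / d) =
      d * regPolylog 1 n (r ^ d) (d * δ) := by
  have hd' : (d : ℂ) ≠ 0 := Nat.cast_ne_zero.2 hd
  set f : ℕ → ℂ := fun k =>
    polylogWeight n (r ^ k) * Complex.exp (δ * Complex.I) ^ k / (k : ℂ) ^ n * d with hf
  have hsum : ∑ j ∈ Finset.range d, regPolylog 1 n r (δ + 2 * Real.pi * j / d) =
      ∑' k, if d ∣ k + 1 then f (k + 1) else 0 := by
    simp only [regPolylog]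
    rw [← Summable.tsum_finsetSum fun j _ => summable_regPolylog (fun _ => by simp) hn hr]
    refine tsum_congr fun k => ?_
    rw [hf, ← mul_ite_zero, ← sum_pow_exp_pow hd, Finset.mul_sum]
    refine Finset.sum_congr rfl fun j _ => ?_
    rw [exp_ofReal_add_two_pi_mul_div_mul_I, mul_pow, Pi.one_apply, Nat.cast_add_one]
    ring
  rw [hsum, tsum_ite_dvd_add_one f hd, regPolylog, ← tsum_mul_left, ← tsum_mul_left]
  refine tsum_congr fun q => ?_
  have hq : (q : ℂ) + 1 ≠ 0 := Nat.cast_add_one_ne_zero q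
  have hexp : Complex.exp (((d * δ : ℝ) : ℂ) * Complex.I) = Complex.exp (δ * Complex.I) ^ d := by
    rw [← Complex.exp_nat_mul]
    push_cast
    ring_nf
  simp only [hf, hexp, Pi.one_apply, one_mul, Nat.cast_mul, Nat.cast_add_one, mul_pow, pow_mul]
  field_simp

theorem regPolylog_one_neg :
    regPolylog 1 n r (-δ) = (starRingEnd ℂ) (regPolylog 1 n r δ) := by
  rw [regPolylog, regPolylog, Complex.conj_tsum]
  refine tsum_congr fun k => ?_
  simp [← Complex.exp_conj]

end regPolylogOne

/-! ### Single-valued polylogarithms -/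

/-- The single-valued version of the real or imaginary part of the `n`-th polylogarithm at
`z = r e ^ (i δ)`: it is `Im ((-i)ⁿ regPolylog 1 n r δ)` on the closed unit disc, and is continued
to `r > 1` by the inversion `z ↦ 1 / conj z`, up to an explicit power of `log r`. -/
noncomputable def svPolylog (n : ℕ) (r δ : ℝ) : ℝ :=
  ((-Complex.I) ^ n * regPolylog 1 n (r / max 1 r ^ 2) δ).im -
    Real.log (max 1 r) ^ n / n.factorial * ((-Complex.I) ^ n).im

section svPolylog

variable {n : ℕ} {r δ : ℝ}

theorem svPolylog_of_le_one (hr : r ≤ 1) :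
    svPolylog (n + 1) r δ = ((-Complex.I) ^ (n + 1) * regPolylog 1 (n + 1) r δ).im := by
  simp [svPolylog, max_eq_left hr]

theorem svPolylog_of_one_le (hr : 1 ≤ r) :
    svPolylog n r δ = ((-Complex.I) ^ n * regPolylog 1 n r⁻¹ δ).im -
      Real.log r ^ n / n.factorial * ((-Complex.I) ^ n).im := by
  have h : r / r ^ 2 = r⁻¹ := by rw [sq, div_mul_cancel_left₀ (zero_lt_one.trans_le hr).ne']
  rw [svPolylog, max_eq_right hr, h]

theorem svPolylog_zero_left : svPolylog (n + 1) 0 δ = 0 := by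
  simp [svPolylog_of_le_one zero_le_one, regPolylog_zero_left]

theorem im_neg_I_pow_mul_conj (n : ℕ) (w : ℂ) :
    ((-Complex.I) ^ n * (starRingEnd ℂ) w).im = (-1) ^ (n + 1) * ((-Complex.I) ^ n * w).im := by
  have h : (-Complex.I) ^ n * (starRingEnd ℂ) w =
      (starRingEnd ℂ) (((-1 : ℝ) ^ n : ℝ) * ((-Complex.I) ^ n * w)) := by
    rw [← mul_assoc, map_mul, Complex.ofReal_pow, ← mul_pow, map_pow]
    simp
  rw [h, Complex.conj_im, Complex.im_ofReal_mul, pow_succ]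
  ring

theorem svPolylog_neg_right : svPolylog n r (-δ) = (-1) ^ (n + 1) * svPolylog n r δ := by
  have h := im_neg_I_pow_mul_conj n 1
  rw [map_one, mul_one] at h
  rw [svPolylog, regPolylog_one_neg, im_neg_I_pow_mul_conj, svPolylog, mul_sub, mul_left_comm, ← h]

theorem svPolylog_periodic : Function.Periodic (svPolylog n r) (2 * Real.pi) := fun δ => by
  have h : Complex.exp (((δ + 2 * Real.pi : ℝ) : ℂ) * Complex.I) = Complex.exp (δ * Complex.I) := by
    push_cast
    rw [add_mul, Complex.exp_periodic]
  simp only [svPolylog, regPolylog, h]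

theorem svPolylog_two_pi_sub :
    svPolylog n r (2 * Real.pi - δ) = (-1) ^ (n + 1) * svPolylog n r δ := by
  rw [sub_eq_neg_add, svPolylog_periodic, svPolylog_neg_right]

theorem svPolylog_zero_right_of_even (hn : Even n) : svPolylog n r 0 = 0 := by
  have h := svPolylog_neg_right (n := n) (r := r) (δ := 0)
  rw [neg_zero, hn.add_one.neg_one_pow] at h
  linarith

theorem svPolylog_pi_of_even (hn : Even n) : svPolylog n r Real.pi = 0 := by
  have h := svPolylog_two_pi_sub (n := n) (r := r) (δ := Real.pi)
  rw [two_mul, add_sub_cancel_right, hn.add_one.neg_one_pow] at h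
  linarith

theorem svPolylog_inv_of_even (hn : Even n) (hr : 0 < r) :
    svPolylog n r⁻¹ δ = svPolylog n r δ := by
  have hI : ((-Complex.I) ^ n).im = 0 := by
    obtain ⟨k, rfl⟩ := hn
    simp [← two_mul, pow_mul, ← Complex.ofReal_one, ← Complex.ofReal_neg, ← Complex.ofReal_pow]
  have hmax : r⁻¹ / max 1 r⁻¹ ^ 2 = r / max 1 r ^ 2 := by
    have h : r * max 1 r⁻¹ = max 1 r := by
      rw [mul_max_of_nonneg _ _ hr.le, mul_one, mul_inv_cancel₀ hr.ne', max_comm]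
    rw [← h, mul_pow]
    field_simp
  rw [svPolylog, svPolylog, hI, hmax, mul_zero, mul_zero]

theorem continuousOn_svPolylog (hn : 2 ≤ n) :
    ContinuousOn (fun p : ℝ × ℝ => svPolylog n p.1 p.2) (Ici 0 ×ˢ univ) := by
  have hmax (r : ℝ) : 0 < max 1 r := zero_lt_one.trans_le (le_max_left 1 r)
  have hbase : Continuous fun p : ℝ × ℝ => (p.1 / max 1 p.1 ^ 2, p.2) := by
    fun_prop (disch := exact fun p => (pow_pos (hmax p.1) 2).ne')
  have hmem : MapsTo (fun p : ℝ × ℝ => (p.1 / max 1 p.1 ^ 2, p.2)) (Ici 0 ×ˢ univ)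
      (Icc 0 1 ×ˢ univ) := fun p hp => by
    refine ⟨⟨div_nonneg hp.1 (sq_nonneg _), (div_le_one (pow_pos (hmax p.1) 2)).2 ?_⟩, trivial⟩
    nlinarith [le_max_left 1 p.1, le_max_right 1 p.1]
  have hR := (continuousOn_regPolylog (b := 1) (fun _ => by simp) hn).comp hbase.continuousOn hmem
  have hlog : Continuous fun p : ℝ × ℝ => Real.log (max 1 p.1) :=
    (by fun_prop : Continuous fun p : ℝ × ℝ => max 1 p.1).log fun p => (hmax p.1).ne'
  exact (Complex.continuous_im.comp_continuousOn (continuousOn_const.mul hR)).sub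
    (((hlog.pow n).div_const _).mul_const _).continuousOn

theorem svPolylog_one_of_ne_one (hr : 0 < r) (hr1 : r ≠ 1) :
    svPolylog 1 r δ = Real.log ‖1 - r * Complex.exp (δ * Complex.I)‖ := by
  have hlt {s : ℝ} (hs : s ∈ Ioo (0 : ℝ) 1) : ((-Complex.I) ^ 1 * regPolylog 1 1 s δ).im =
      Real.log ‖1 - s * Complex.exp (δ * Complex.I)‖ := by
    have hz : ‖(s : ℂ) * Complex.exp (δ * Complex.I)‖ < 1 := by
      rw [norm_ofReal_mul_exp_mul_I hs.1.le]; exact hs.2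
    rw [regPolylog_eq_sum (fun _ => by simp) hs]
    simp [polylogSeries_one_one hz, Complex.log_re]
  rcases hr1.lt_or_gt with h | h
  · rw [← zero_add 1, svPolylog_of_le_one h.le, zero_add, hlt ⟨hr, h⟩]
  · have hfac : 1 - (r : ℂ) * Complex.exp (δ * Complex.I) = -(r * Complex.exp (δ * Complex.I)) *
        (starRingEnd ℂ) (1 - (r⁻¹ : ℝ) * Complex.exp (δ * Complex.I)) := by
      have hr0 : (r : ℂ) ≠ 0 := Complex.ofReal_ne_zero.2 hr.ne'
      have he := Complex.exp_ne_zero (δ * Complex.I)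
      simp only [map_sub, map_one, map_mul, Complex.conj_ofReal, ← Complex.exp_conj,
        Complex.conj_I, mul_neg, Complex.exp_neg]
      push_cast
      field_simp
      ring
    have hinv : r⁻¹ ∈ Ioo (0 : ℝ) 1 := ⟨inv_pos.2 hr, inv_lt_one_of_one_lt₀ h⟩
    have hne : ‖1 - ((r⁻¹ : ℝ) : ℂ) * Complex.exp (δ * Complex.I)‖ ≠ 0 := by
      rw [norm_ne_zero_iff, sub_ne_zero]
      intro h1
      have := congrArg norm h1
      rw [norm_ofReal_mul_exp_mul_I hinv.1.le, norm_one] at this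
      exact hinv.2.ne this.symm
    rw [svPolylog_of_one_le h.le, hlt hinv, hfac, norm_mul, norm_neg,
      norm_ofReal_mul_exp_mul_I hr.le, Complex.norm_conj, Real.log_mul hr.ne' hne]
    simp only [Complex.ofReal_inv, pow_one, Nat.factorial_one, Nat.cast_one, div_one,
      Complex.neg_im, Complex.I_im, mul_neg, mul_one, sub_neg_eq_add]
    ring

end svPolylog

section Derivative

variable {n : ℕ} {ρ α : ℝ → ℝ} {ρ' m t : ℝ}

theorem polylogSeries_one_zero_inv_conj {z : ℂ} (hz : 1 < ‖z‖) :
    polylogSeries 1 0 ((starRingEnd ℂ) z)⁻¹ = -1 - (starRingEnd ℂ) (z / (1 - z)) := by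
  have hz0 : (starRingEnd ℂ) z ≠ 0 :=
    (map_ne_zero _).2 (norm_pos_iff.1 (zero_lt_one.trans hz))
  have hz1 : 1 - (starRingEnd ℂ) z ≠ 0 := by
    rw [sub_ne_zero]
    intro h
    rw [← Complex.norm_conj, ← h, norm_one] at hz
    exact hz.false
  have hz1' : (starRingEnd ℂ) z - 1 ≠ 0 := by rwa [← neg_sub, neg_ne_zero]
  rw [polylogSeries_one_zero (by rw [norm_inv, Complex.norm_conj]; exact inv_lt_one_of_one_lt₀ hz),
    map_div₀, map_sub, map_one]
  have : 1 - ((starRingEnd ℂ) z)⁻¹ ≠ 0 := by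
    rw [sub_ne_zero, ne_eq, eq_comm, inv_eq_one, eq_comm]; exact sub_ne_zero.1 hz1
  field_simp
  ring

/-- Inversion turns the logarithmic derivative `x + i m` of the point into `-x + i m`. -/
theorem mul_polylogSeries_one_zero_inv (x m δ : ℝ) {r : ℝ} (hr : 1 < r) :
    (-x + m * Complex.I) * polylogSeries 1 0 ((r⁻¹ : ℝ) * Complex.exp (δ * Complex.I)) =
      x - m * Complex.I + (starRingEnd ℂ) ((x + m * Complex.I) *
        (r * Complex.exp (δ * Complex.I) / (1 - r * Complex.exp (δ * Complex.I)))) := by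
  have hnorm : 1 < ‖(r : ℂ) * Complex.exp (δ * Complex.I)‖ := by
    rwa [norm_ofReal_mul_exp_mul_I (zero_le_one.trans hr.le)]
  have hinv : ((r⁻¹ : ℝ) : ℂ) * Complex.exp (δ * Complex.I) =
      ((starRingEnd ℂ) (r * Complex.exp (δ * Complex.I)))⁻¹ := by
    simp [← Complex.exp_conj, Complex.exp_neg, mul_comm]
  rw [hinv, polylogSeries_one_zero_inv_conj hnorm, map_mul]
  simp only [map_add, map_mul, Complex.conj_ofReal, Complex.conj_I]
  ring

theorem im_neg_I_pow_succ_mul_sub (n : ℕ) (x m : ℝ) :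
    ((-Complex.I) ^ (n + 1) * (x - m * Complex.I)).im =
      x * ((-Complex.I) ^ (n + 1)).im - m * ((-Complex.I) ^ n).im := by
  rw [← Complex.im_ofReal_mul, ← Complex.im_ofReal_mul, ← Complex.sub_im]
  congr 1
  linear_combination ((-Complex.I) ^ n * m) * Complex.I_sq

theorem im_neg_I_pow_succ_mul (n : ℕ) (m x : ℝ) (w v : ℂ) :
    ((-Complex.I) ^ (n + 1) * (m * Complex.I * w + (x : ℂ) ^ n / n.factorial * v)).im =
      m * ((-Complex.I) ^ n * w).im + x ^ n / n.factorial * ((-Complex.I) ^ (n + 1) * v).im := by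
  have h : (-Complex.I) ^ (n + 1) * (m * Complex.I * w + (x : ℂ) ^ n / n.factorial * v) =
      (m : ℝ) * ((-Complex.I) ^ n * w) +
        ((x ^ n / n.factorial : ℝ) : ℂ) * ((-Complex.I) ^ (n + 1) * v) := by
    push_cast
    linear_combination (-(-Complex.I) ^ n * m * w) * Complex.I_sq
  rw [h, Complex.add_im, Complex.im_ofReal_mul, Complex.im_ofReal_mul]

theorem hasDerivAt_im_regPolylog_one (n : ℕ) (hρ : HasDerivAt ρ ρ' t) (hα : HasDerivAt α m t)
    (hρt : ρ t ∈ Ioo (0 : ℝ) 1) :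
    HasDerivAt (fun s => ((-Complex.I) ^ (n + 1) * regPolylog 1 (n + 1) (ρ s) (α s)).im)
      (m * ((-Complex.I) ^ n * regPolylog 1 n (ρ t) (α t)).im +
        (-Real.log (ρ t)) ^ n / n.factorial * ((-Complex.I) ^ (n + 1) *
          ((ρ' / ρ t + m * Complex.I) *
            polylogSeries 1 0 (ρ t * Complex.exp (α t * Complex.I)))).im) t := by
  have h := (hasDerivAt_regPolylog (b := 1) (fun _ => by simp) n hρ hα hρt).const_mul
    ((-Complex.I) ^ (n + 1))
  rw [← im_neg_I_pow_succ_mul, Complex.ofReal_neg]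
  exact Complex.imCLM.hasFDerivAt.comp_hasDerivAt t h

theorem hasDerivAt_svPolylog_of_lt_one (n : ℕ) (hρ : HasDerivAt ρ ρ' t) (hα : HasDerivAt α m t)
    (hρt : ρ t ∈ Ioo (0 : ℝ) 1) :
    HasDerivAt (fun s => svPolylog (n + 1) (ρ s) (α s))
      (m * svPolylog n (ρ t) (α t) +
        (-Real.log (ρ t)) ^ n / n.factorial * ((-Complex.I) ^ (n + 1) *
          ((ρ' / ρ t + m * Complex.I) * (ρ t * Complex.exp (α t * Complex.I) /
            (1 - ρ t * Complex.exp (α t * Complex.I))))).im) t := by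
  have hz : ‖(ρ t : ℂ) * Complex.exp (α t * Complex.I)‖ < 1 := by
    rw [norm_ofReal_mul_exp_mul_I hρt.1.le]; exact hρt.2
  have hS : svPolylog n (ρ t) (α t) = ((-Complex.I) ^ n * regPolylog 1 n (ρ t) (α t)).im := by
    cases n with
    | zero => simp [svPolylog, max_eq_left hρt.2.le]
    | succ n => exact svPolylog_of_le_one hρt.2.le
  have hev : (fun s => svPolylog (n + 1) (ρ s) (α s)) =ᶠ[𝓝 t]
      fun s => ((-Complex.I) ^ (n + 1) * regPolylog 1 (n + 1) (ρ s) (α s)).im := by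
    filter_upwards [hρ.continuousAt.eventually_lt_const hρt.2] with s hs
    exact svPolylog_of_le_one hs.le
  rw [hS, ← polylogSeries_one_zero hz]
  exact (hasDerivAt_im_regPolylog_one n hρ hα hρt).congr_of_eventuallyEq hev

theorem hasDerivAt_svPolylog_of_one_lt (n : ℕ) (hρ : HasDerivAt ρ ρ' t) (hα : HasDerivAt α m t)
    (hρt : 1 < ρ t) :
    HasDerivAt (fun s => svPolylog (n + 1) (ρ s) (α s))
      (m * svPolylog n (ρ t) (α t) +
        (-Real.log (ρ t)) ^ n / n.factorial * ((-Complex.I) ^ (n + 1) *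
          ((ρ' / ρ t + m * Complex.I) * (ρ t * Complex.exp (α t * Complex.I) /
            (1 - ρ t * Complex.exp (α t * Complex.I))))).im) t := by
  have hρ0 : 0 < ρ t := zero_lt_one.trans hρt
  have hlogDeriv : ((-ρ' / ρ t ^ 2 : ℝ) : ℂ) / ((ρ t)⁻¹ : ℝ) = -((ρ' / ρ t : ℝ) : ℂ) := by
    have : (ρ t : ℂ) ≠ 0 := Complex.ofReal_ne_zero.2 hρ0.ne'
    push_cast
    field_simp
  have hbase := hasDerivAt_im_regPolylog_one n (hρ.fun_inv hρ0.ne') hα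
    ⟨inv_pos.2 hρ0, inv_lt_one_of_one_lt₀ hρt⟩
  have hlog := (((hρ.log hρ0.ne').fun_pow (n + 1)).div_const ((n + 1).factorial : ℝ)).mul_const
    ((-Complex.I) ^ (n + 1)).im
  have hev : (fun s => svPolylog (n + 1) (ρ s) (α s)) =ᶠ[𝓝 t]
      fun s => ((-Complex.I) ^ (n + 1) * regPolylog 1 (n + 1) (ρ s)⁻¹ (α s)).im -
        Real.log (ρ s) ^ (n + 1) / (n + 1).factorial * ((-Complex.I) ^ (n + 1)).im := by
    filter_upwards [hρ.continuousAt.eventually_const_lt hρt] with s hs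
    exact svPolylog_of_one_le hs.le
  refine ((hbase.sub hlog).congr_of_eventuallyEq hev).congr_deriv ?_
  have hsign : (-Real.log (ρ t)) ^ n = (-1) ^ (n + 1 + 1) * Real.log (ρ t) ^ n := by
    rw [neg_pow, pow_add _ n 2, neg_one_sq, mul_one]
  have hn : ((n : ℝ) + 1) ≠ 0 := Nat.cast_add_one_ne_zero n
  rw [hlogDeriv, mul_polylogSeries_one_zero_inv _ _ _ hρt, mul_add, Complex.add_im,
    im_neg_I_pow_succ_mul_sub, im_neg_I_pow_mul_conj, svPolylog_of_one_le hρt.le, Real.log_inv,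
    neg_neg, hsign, Nat.factorial_succ, Nat.add_sub_cancel]
  push_cast
  field_simp
  ring

theorem hasDerivAt_svPolylog (n : ℕ) (hρ : HasDerivAt ρ ρ' t) (hα : HasDerivAt α m t)
    (hρ0 : 0 < ρ t) (hρ1 : ρ t ≠ 1) :
    HasDerivAt (fun s => svPolylog (n + 1) (ρ s) (α s))
      (m * svPolylog n (ρ t) (α t) +
        (-Real.log (ρ t)) ^ n / n.factorial * ((-Complex.I) ^ (n + 1) *
          ((ρ' / ρ t + m * Complex.I) * (ρ t * Complex.exp (α t * Complex.I) /
            (1 - ρ t * Complex.exp (α t * Complex.I))))).im) t :=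
  hρ1.lt_or_gt.elim (fun h => hasDerivAt_svPolylog_of_lt_one n hρ hα ⟨hρ0, h⟩)
    fun h => hasDerivAt_svPolylog_of_one_lt n hρ hα h

end Derivative

/-- Near `t` the point `z = ρ e ^ (i α)` moves with angular velocity `m`, off the origin and the
unit circle, and satisfies `1 - z = N e ^ (i κ s)` with `N` real. -/
structure PolarCurveAt (ρ α N : ℝ → ℝ) (m κ N' t : ℝ) : Prop where
  radius_pos : 0 < ρ t
  radius_ne_one : ρ t ≠ 1
  differentiableAt_radius : DifferentiableAt ℝ ρ t
  hasDerivAt_angle : HasDerivAt α m t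
  hasDerivAt_factor : HasDerivAt N N' t
  factor_ne_zero : N t ≠ 0
  one_sub_eventuallyEq : (fun s => 1 - (ρ s : ℂ) * Complex.exp (α s * Complex.I)) =ᶠ[𝓝 t]
    fun s => N s * Complex.exp ((κ * s : ℝ) * Complex.I)

namespace PolarCurveAt

variable {ρ α N : ℝ → ℝ} {m κ N' t : ℝ}

theorem logDeriv_one_sub (h : PolarCurveAt ρ α N m κ N' t) :
    (deriv ρ t / ρ t + m * Complex.I) * (ρ t * Complex.exp (α t * Complex.I) /
      (1 - ρ t * Complex.exp (α t * Complex.I))) = -((N' / N t : ℝ) : ℂ) - κ * Complex.I := by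
  have hl := ((hasDerivAt_ofReal_mul_exp_mul_I h.differentiableAt_radius.hasDerivAt
    h.hasDerivAt_angle h.radius_pos.ne').const_sub 1).congr_of_eventuallyEq
      h.one_sub_eventuallyEq.symm
  have hr := hasDerivAt_ofReal_mul_exp_mul_I h.hasDerivAt_factor
    ((hasDerivAt_id t).const_mul κ) h.factor_ne_zero
  have hN : (N t : ℂ) ≠ 0 := Complex.ofReal_ne_zero.2 h.factor_ne_zero
  have hexp := Complex.exp_ne_zero ((κ * t : ℝ) * Complex.I)
  have huniq := hl.unique hr
  simp only [id, mul_one] at huniq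
  rw [h.one_sub_eventuallyEq.eq_of_nhds, ← mul_div_assoc, div_eq_iff (mul_ne_zero hN hexp),
    ← neg_inj, huniq]
  push_cast
  ring

theorem hasDerivAt_svPolylog_two (h : PolarCurveAt ρ α N m κ N' t) :
    HasDerivAt (fun s => svPolylog 2 (ρ s) (α s))
      (m * Real.log (N t) - κ * Real.log (ρ t)) t := by
  refine (hasDerivAt_svPolylog 1 h.differentiableAt_radius.hasDerivAt h.hasDerivAt_angle
    h.radius_pos h.radius_ne_one).congr_deriv ?_
  rw [h.logDeriv_one_sub, svPolylog_one_of_ne_one h.radius_pos h.radius_ne_one,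
    h.one_sub_eventuallyEq.eq_of_nhds, norm_mul, Complex.norm_exp_ofReal_mul_I, mul_one,
    Complex.norm_real, Real.norm_eq_abs, Real.log_abs]
  simp only [pow_succ, pow_zero, mul_neg, one_mul, Nat.factorial_one, Nat.cast_one, div_one,
    Nat.reduceAdd, neg_mul, Complex.I_mul_I, neg_neg, Complex.ofReal_div, neg_sub, sub_neg_eq_add,
    Complex.add_im, Complex.mul_im, Complex.ofReal_re, Complex.I_im, mul_one, Complex.ofReal_im,
    Complex.I_re, mul_zero, add_zero, Complex.div_ofReal_im, zero_div]
  ring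

theorem hasDerivAt_svPolylog_three (h : PolarCurveAt ρ α N m κ N' t) :
    HasDerivAt (fun s => svPolylog 3 (ρ s) (α s))
      (m * svPolylog 2 (ρ t) (α t) - Real.log (ρ t) ^ 2 / 2 * (N' / N t)) t := by
  refine (hasDerivAt_svPolylog 2 h.differentiableAt_radius.hasDerivAt h.hasDerivAt_angle
    h.radius_pos h.radius_ne_one).congr_deriv ?_
  rw [h.logDeriv_one_sub]
  simp only [pow_succ, pow_zero, mul_neg, one_mul, neg_mul, neg_neg, Nat.factorial_two,
    Nat.cast_ofNat, Nat.reduceAdd, Complex.I_mul_I, Complex.ofReal_div, Complex.mul_im,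
    Complex.I_re, Complex.sub_im, Complex.neg_im, Complex.div_ofReal_im, Complex.ofReal_im,
    zero_div, neg_zero, Complex.ofReal_re, Complex.I_im, mul_one, mul_zero, add_zero, zero_sub,
    zero_mul, Complex.sub_re, Complex.neg_re, Complex.div_ofReal_re, Complex.mul_re, sub_self,
    sub_zero, zero_add]
  ring

theorem hasDerivAt_svPolylog_four (h : PolarCurveAt ρ α N m κ N' t) :
    HasDerivAt (fun s => svPolylog 4 (ρ s) (α s))
      (m * svPolylog 3 (ρ t) (α t) + κ * Real.log (ρ t) ^ 3 / 6) t := by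
  refine (hasDerivAt_svPolylog 3 h.differentiableAt_radius.hasDerivAt h.hasDerivAt_angle
    h.radius_pos h.radius_ne_one).congr_deriv ?_
  rw [h.logDeriv_one_sub]
  simp only [pow_succ, pow_zero, mul_neg, one_mul, neg_mul, neg_neg, Nat.factorial,
    Nat.succ_eq_add_one, Nat.reduceAdd, zero_add, mul_one, Nat.reduceMul, Nat.cast_ofNat,
    Complex.I_mul_I, Complex.ofReal_div, Complex.sub_im, Complex.neg_im, Complex.div_ofReal_im,
    Complex.ofReal_im, zero_div, neg_zero, Complex.mul_im, Complex.ofReal_re, Complex.I_im,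
    Complex.I_re, mul_zero, add_zero, zero_sub, add_right_inj]
  ring

end PolarCurveAt

section UnitCircle

variable {α : ℝ → ℝ} {m t : ℝ}

theorem hasDerivAt_svPolylog_succ_unitCircle {n : ℕ} (hn : 2 ≤ n) (hα : HasDerivAt α m t) :
    HasDerivAt (fun s => svPolylog (n + 1) 1 (α s)) (m * svPolylog n 1 (α t)) t := by
  obtain ⟨n, rfl⟩ : ∃ k, n = k + 1 := Nat.exists_eq_succ_of_ne_zero (by omega)
  have hterm (k : ℕ) (δ : ℝ) : HasDerivAt
      (fun δ : ℝ => (1 : ℂ) * polylogWeight (n + 2) (1 ^ (k + 1)) *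
        Complex.exp (δ * Complex.I) ^ (k + 1) / ((k : ℂ) + 1) ^ (n + 2))
      (Complex.I * (1 * polylogWeight (n + 1) (1 ^ (k + 1)) *
        Complex.exp (δ * Complex.I) ^ (k + 1) / ((k : ℂ) + 1) ^ (n + 1))) δ := by
    have hk : (k : ℂ) + 1 ≠ 0 := Nat.cast_add_one_ne_zero k
    refine (((((hasDerivAt_id δ).ofReal_comp.mul_const Complex.I).cexp.fun_pow (k + 1)).const_mul
      ((1 : ℂ) * polylogWeight (n + 2) (1 ^ (k + 1)))).div_const _).congr_deriv ?_
    simp only [one_pow, polylogWeight_succ_one, id]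
    push_cast
    field_simp
    ring
  have hR : HasDerivAt (regPolylog 1 (n + 2) 1) (Complex.I * regPolylog 1 (n + 1) 1 (α t))
      (α t) := by
    rw [regPolylog, ← tsum_mul_left]
    refine hasDerivAt_tsum (summable_one_div_nat_add_one_pow hn) hterm (fun k δ => ?_)
      (summable_regPolylog (δ := 0) (fun _ => by simp) (hn.trans (n + 1).le_succ) (by simp)) _
    rw [norm_mul, Complex.norm_I, one_mul]
    exact norm_regPolylog_term_le (b := 1) (fun _ => by simp) (by simp) k
  have him := Complex.imCLM.hasFDerivAt.comp_hasDerivAt t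
    ((hR.const_mul ((-Complex.I) ^ (n + 2))).scomp t hα)
  refine (him.congr_of_eventuallyEq (.of_forall fun s => svPolylog_of_le_one le_rfl)).congr_deriv ?_
  rw [svPolylog_of_le_one le_rfl, pow_succ, mul_assoc, neg_mul, ← mul_assoc Complex.I]
  simp

theorem tendstoUniformlyOnFilter_of_continuousAt {X Y E : Type*} [TopologicalSpace X]
    [TopologicalSpace Y] [UniformSpace E] {F : X × Y → E} {a : X} {y : Y}
    (hF : ContinuousAt F (a, y)) :
    TendstoUniformlyOnFilter (fun x y => F (x, y)) (fun y => F (a, y)) (𝓝 a) (𝓝 y) := by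
  rw [tendstoUniformlyOnFilter_iff_tendsto, ← nhds_prod_eq]
  have hbase : Tendsto (fun p : X × Y => F (a, p.2)) (𝓝 (a, y)) (𝓝 (F (a, y))) :=
    (hF.comp (f := fun p : X × Y => (a, p.2)) (x := (a, y)) (by fun_prop)).tendsto
  exact (hbase.prodMk_nhds hF.tendsto).mono_right (nhds_le_uniformity _)

/-- Abel's limit theorem in the angular variable: the derivatives at radius `r` converge
uniformly near the angle as `r → 1⁻`. -/
theorem hasDerivAt_svPolylog_two_unitCircle (hα : HasDerivAt α m t)
    (ht : Real.sin (α t / 2) ≠ 0) :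
    HasDerivAt (fun s => svPolylog 2 1 (α s)) (m * Real.log (2 * Real.sin (α t / 2))) t := by
  set z : ℝ × ℝ → ℂ := fun p => p.1 * Complex.exp (p.2 * Complex.I) with hz
  set S' : ℝ × ℝ → ℝ := fun p => Real.log ‖1 - z p‖ -
    Real.log p.1 * ((-Complex.I) ^ 2 * (Complex.I * (z p / (1 - z p)))).im with hS'
  have hnorm : ‖1 - z (1, α t)‖ = |2 * Real.sin (α t / 2)| := by
    simp only [hz]
    rw [Complex.ofReal_one, one_mul, norm_sub_rev, mul_comm,
      Complex.norm_exp_I_mul_ofReal_sub_one, Real.norm_eq_abs]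
  have hz1 : ‖1 - z (1, α t)‖ ≠ 0 := by rw [hnorm]; simpa using ht
  have hcont : ContinuousAt S' (1, α t) := by
    have hsub : ContinuousAt (fun p => 1 - z p) (1, α t) := by fun_prop
    have hquot := (by fun_prop : ContinuousAt z (1, α t)).div hsub (norm_ne_zero_iff.1 hz1)
    exact (hsub.norm.log hz1).sub ((continuousAt_fst.log one_ne_zero).mul
      (Complex.continuous_im.continuousAt.comp
        (continuousAt_const.mul (continuousAt_const.mul hquot))))
  have hlt : ∀ᶠ r : ℝ in 𝓝[<] 1, r ∈ Ioo (0 : ℝ) 1 := Ioo_mem_nhdsLT zero_lt_one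
  have hder : ∀ᶠ p in 𝓝[<] (1 : ℝ) ×ˢ 𝓝 (α t), HasDerivAt (svPolylog 2 p.1) (S' p) p.2 := by
    filter_upwards [hlt.prod_inl _] with p hp
    refine (hasDerivAt_svPolylog 1 (hasDerivAt_const p.2 p.1) (hasDerivAt_id p.2) hp.1
      hp.2.ne).congr_deriv ?_
    rw [svPolylog_one_of_ne_one hp.1 hp.2.ne]
    simp [hS', hz]
  have hlim (δ : ℝ) : Tendsto (fun r => svPolylog 2 r δ) (𝓝[<] 1) (𝓝 (svPolylog 2 1 δ)) := by
    have h := (continuousOn_svPolylog le_rfl).comp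
      (by fun_prop : ContinuousOn (fun r : ℝ => (r, δ)) (Ici 0)) fun r hr => ⟨hr, trivial⟩
    exact (h.continuousAt (Ici_mem_nhds zero_lt_one)).tendsto.mono_left nhdsWithin_le_nhds
  have hS := hasDerivAt_of_tendstoUniformlyOnFilter
    ((tendstoUniformlyOnFilter_of_continuousAt hcont).mono_left nhdsWithin_le_nhds) hder
    (.of_forall hlim)
  refine (hS.comp t hα).congr_deriv ?_
  simp only [hS', hnorm, Real.log_abs, Real.log_one, zero_mul, sub_zero, mul_comm]

end UnitCircle

section SpecialValues

variable {n : ℕ} {r : ℝ}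

theorem sum_svPolylog_add_two_pi_mul_div (hn : 2 ≤ n) (hr : r ∈ Icc (0 : ℝ) 1) {d : ℕ}
    (hd : d ≠ 0) (δ : ℝ) :
    (d : ℝ) ^ n * ∑ j ∈ Finset.range d, svPolylog n r (δ + 2 * Real.pi * j / d) =
      d * svPolylog n (r ^ d) (d * δ) := by
  obtain ⟨n, rfl⟩ : ∃ k, n = k + 1 := Nat.exists_eq_succ_of_ne_zero (by omega)
  have h := congrArg (fun w => ((-Complex.I) ^ (n + 1) * w).im)
    (sum_regPolylog_add_two_pi_mul_div (δ := δ) hn hr hd)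
  simp only [svPolylog_of_le_one hr.2, svPolylog_of_le_one (pow_le_one₀ hr.1 hr.2),
    ← Complex.im_sum, ← Finset.mul_sum]
  rw [← Complex.im_ofReal_mul, ← Complex.im_ofReal_mul]
  simpa only [Complex.ofReal_pow, Complex.ofReal_natCast, mul_left_comm] using h

theorem svPolylog_add_svPolylog_add_pi (hn : 2 ≤ n) (hr : r ∈ Icc (0 : ℝ) 1) (δ : ℝ) :
    2 ^ n * (svPolylog n r δ + svPolylog n r (δ + Real.pi)) =
      2 * svPolylog n (r ^ 2) (2 * δ) := by
  simpa [Finset.sum_range_succ] using sum_svPolylog_add_two_pi_mul_div hn hr two_ne_zero δ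

theorem svPolylog_three_one_zero : svPolylog 3 1 0 = zeta 3 := by
  have h : regPolylog 1 3 1 0 = ((zeta 3 : ℝ) : ℂ) := by
    simp [regPolylog, polylogWeight_succ_one, zeta, Complex.ofReal_tsum]
  simp [svPolylog_of_le_one, h, pow_succ]

theorem svPolylog_three_one_pi : svPolylog 3 1 Real.pi = -(3 / 4) * zeta 3 := by
  have h := svPolylog_add_svPolylog_add_pi (n := 3) (by norm_num) (by simp : (1 : ℝ) ∈ Icc 0 1) 0
  simp only [one_pow, mul_zero, zero_add, svPolylog_three_one_zero] at h
  linarith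

theorem svPolylog_four_one_pi_div_two : svPolylog 4 1 (Real.pi / 2) = dirichletBeta 4 := by
  have hterm (k : ℕ) : (1 : ℕ → ℂ) k * polylogWeight 4 (1 ^ (k + 1)) *
      Complex.exp (((Real.pi / 2 : ℝ) : ℂ) * Complex.I) ^ (k + 1) / ((k : ℂ) + 1) ^ 4 =
      Complex.I ^ (k + 1) / ((((k : ℝ) + 1) ^ 4 : ℝ) : ℂ) := by
    simp [polylogWeight_succ_one]
  have hs := summable_regPolylog (b := 1) (n := 4) (r := 1) (δ := Real.pi / 2)
    (fun _ => by simp) (by norm_num) (by simp)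
  simp only [hterm] at hs
  have hinj : Function.Injective fun j : ℕ => 2 * j := mul_right_injective₀ two_ne_zero
  have hI : (-Complex.I) ^ 4 = 1 := by rw [Even.neg_pow (by decide), Complex.I_pow_four]
  rw [svPolylog_of_le_one le_rfl, hI, one_mul, regPolylog, dirichletBeta]
  simp only [hterm]
  rw [Complex.im_tsum hs, ← hinj.tsum_eq]
  · refine tsum_congr fun j => ?_
    have hpow : (-1 : ℂ) ^ j = ((-1 : ℝ) ^ j : ℝ) := by push_cast; rfl
    rw [Complex.div_ofReal_im, pow_succ, pow_mul, Complex.I_sq, hpow, Complex.im_ofReal_mul]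
    simp
  · intro k hk
    by_contra hodd
    obtain ⟨j, rfl⟩ : Odd k := Nat.not_even_iff_odd.1 fun ⟨j, hj⟩ => hodd ⟨j, by simp [hj, two_mul]⟩
    have hpow : (-1 : ℂ) ^ (j + 1) = ((-1 : ℝ) ^ (j + 1) : ℝ) := by push_cast; rfl
    refine hk ?_
    simp only [show 2 * j + 1 + 1 = 2 * (j + 1) by ring, pow_mul, Complex.I_sq, hpow]
    rw [Complex.div_ofReal_im, Complex.ofReal_im, zero_div]

/-- The duplication formula also ties `2 π / 3` to `4 π / 3`, its opposite modulo `2 π`. -/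
theorem svPolylog_four_one_two_pi_div_three :
    svPolylog 4 1 (2 * (Real.pi / 3)) = 8 / 9 * svPolylog 4 1 (Real.pi / 3) := by
  have h := svPolylog_add_svPolylog_add_pi (n := 4) (by norm_num) (by simp : (1 : ℝ) ∈ Icc 0 1)
    (Real.pi / 3)
  rw [show Real.pi / 3 + Real.pi = 2 * Real.pi - 2 * (Real.pi / 3) by ring, svPolylog_two_pi_sub,
    one_pow] at h
  linarith

theorem svPolylog_four_one_pi_div_six_add :
    svPolylog 4 1 (Real.pi / 6) + svPolylog 4 1 (5 * Real.pi / 6) =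
      28 / 27 * dirichletBeta 4 := by
  have h := sum_svPolylog_add_two_pi_mul_div (n := 4) (d := 3) (by norm_num)
    (by simp : (1 : ℝ) ∈ Icc 0 1) three_ne_zero (Real.pi / 6)
  simp only [Finset.sum_range_succ, Finset.sum_range_zero, zero_add, Nat.cast_ofNat, Nat.cast_zero,
    Nat.cast_one, one_pow] at h
  rw [show Real.pi / 6 + 2 * Real.pi * 0 / 3 = Real.pi / 6 by ring,
    show Real.pi / 6 + 2 * Real.pi * 1 / 3 = 5 * Real.pi / 6 by ring,
    show Real.pi / 6 + 2 * Real.pi * 2 / 3 = 2 * Real.pi - Real.pi / 2 by ring,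
    show 3 * (Real.pi / 6) = Real.pi / 2 by ring, svPolylog_two_pi_sub,
    svPolylog_four_one_pi_div_two] at h
  linarith

theorem svPolylog_four_pi_div_four_sub (hr : r ∈ Icc (0 : ℝ) 1) :
    svPolylog 4 r (Real.pi / 4) - svPolylog 4 r (3 * Real.pi / 4) =
      svPolylog 4 (r ^ 2) (Real.pi / 2) / 8 := by
  have h := svPolylog_add_svPolylog_add_pi (n := 4) (by norm_num) hr (Real.pi / 4)
  rw [show Real.pi / 4 + Real.pi = 2 * Real.pi - 3 * Real.pi / 4 by ring, svPolylog_two_pi_sub,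
    show 2 * (Real.pi / 4) = Real.pi / 2 by ring] at h
  linarith

end SpecialValues

section SineCurve

variable {α N : ℝ → ℝ} {m κ N' ψ : ℝ} {n : ℕ}

theorem continuous_svPolylog_one (hn : 2 ≤ n) (hα : Continuous α) :
    Continuous fun ψ => svPolylog n 1 (α ψ) :=
  continuousOn_univ.1 <| (continuousOn_svPolylog hn).comp
    (f := fun ψ => ((1 : ℝ), α ψ)) (by fun_prop) fun _ _ => ⟨zero_le_one' ℝ, trivial⟩

theorem sin_pos_of_mem_Ioo_pi_div_two (hψ : ψ ∈ Ioo 0 (Real.pi / 2)) : 0 < Real.sin ψ :=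
  Real.sin_pos_of_pos_of_lt_pi hψ.1 (by linarith [hψ.2, Real.pi_pos])

theorem cos_pos_of_mem_Ico_pi_div_two (hψ : ψ ∈ Ico 0 (Real.pi / 2)) : 0 < Real.cos ψ :=
  Real.cos_pos_of_mem_Ioo ⟨by linarith [hψ.1, Real.pi_pos], hψ.2⟩

theorem two_mul_sin_lt_one (hψ : ψ ∈ Ico 0 (Real.pi / 6)) : 2 * Real.sin ψ < 1 := by
  have hpi := Real.pi_pos
  have hlt : Real.sin ψ < Real.sin (Real.pi / 6) :=
    Real.sin_lt_sin_of_lt_of_le_pi_div_two (by linarith [hψ.1]) (by linarith) hψ.2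
  rw [Real.sin_pi_div_six] at hlt
  linarith

theorem two_mul_sin_mem_Ioo (hψ : ψ ∈ Ioo 0 (Real.pi / 6)) : 2 * Real.sin ψ ∈ Ioo (0 : ℝ) 1 :=
  ⟨mul_pos two_pos (sin_pos_of_mem_Ioo_pi_div_two ⟨hψ.1, by linarith [hψ.2, Real.pi_pos]⟩),
    two_mul_sin_lt_one (Ioo_subset_Ico_self hψ)⟩

theorem two_mul_sin_pi_div_six : 2 * Real.sin (Real.pi / 6) = 1 := by
  rw [Real.sin_pi_div_six, mul_one_div_cancel two_ne_zero]

theorem two_mul_sin_mem_Icc (hψ : ψ ∈ Icc 0 (Real.pi / 6)) : 2 * Real.sin ψ ∈ Icc (0 : ℝ) 1 := by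
  rcases hψ.1.eq_or_lt with rfl | h0
  · simp
  rcases hψ.2.eq_or_lt with rfl | h6
  · simp
  · exact Ioo_subset_Icc_self (two_mul_sin_mem_Ioo ⟨h0, h6⟩)

theorem continuousOn_svPolylog_two_mul_sin (hn : 2 ≤ n) (hα : Continuous α) :
    ContinuousOn (fun ψ => svPolylog n (2 * Real.sin ψ) (α ψ)) (Icc 0 (Real.pi / 2)) :=
  (continuousOn_svPolylog hn).comp (f := fun ψ => (2 * Real.sin ψ, α ψ)) (by fun_prop)
    fun ψ hψ => ⟨mul_nonneg zero_le_two (Real.sin_nonneg_of_nonneg_of_le_pi hψ.1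
      (by linarith [hψ.2, Real.pi_pos])), trivial⟩

theorem two_mul_sin_ne_one (hψ : ψ ∈ Ioo 0 (Real.pi / 2)) (hψ' : ψ ≠ Real.pi / 6) :
    2 * Real.sin ψ ≠ 1 := fun h => by
  refine hψ' (Real.injOn_sin ⟨?_, hψ.2.le⟩ ⟨?_, ?_⟩ ?_)
  any_goals linarith [hψ.1, Real.pi_pos]
  rw [Real.sin_pi_div_six]
  linarith

theorem one_sub_ofReal_mul_exp_eq {R A δ φ : ℝ} (hre : 1 - R * Real.cos δ = A * Real.cos φ)
    (him : -(R * Real.sin δ) = A * Real.sin φ) :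
    1 - (R : ℂ) * Complex.exp (δ * Complex.I) = A * Complex.exp (φ * Complex.I) := by
  apply Complex.ext
  · rw [Complex.sub_re, Complex.one_re, Complex.re_ofReal_mul, Complex.re_ofReal_mul,
      Complex.exp_ofReal_mul_I_re, Complex.exp_ofReal_mul_I_re, hre]
  · rw [Complex.sub_im, Complex.one_im, Complex.im_ofReal_mul, Complex.im_ofReal_mul,
      Complex.exp_ofReal_mul_I_im, Complex.exp_ofReal_mul_I_im, zero_sub, him]

theorem PolarCurveAt.two_mul_sin (hψ : ψ ∈ Ioo 0 (Real.pi / 2)) (hψ' : ψ ≠ Real.pi / 6)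
    (hα : HasDerivAt α m ψ) (hN : HasDerivAt N N' ψ) (hN0 : N ψ ≠ 0)
    (hre : ∀ s, 1 - 2 * Real.sin s * Real.cos (α s) = N s * Real.cos (κ * s))
    (him : ∀ s, -(2 * Real.sin s * Real.sin (α s)) = N s * Real.sin (κ * s)) :
    PolarCurveAt (fun s => 2 * Real.sin s) α N m κ N' ψ where
  radius_pos := mul_pos two_pos (sin_pos_of_mem_Ioo_pi_div_two hψ)
  radius_ne_one := two_mul_sin_ne_one hψ hψ'
  differentiableAt_radius := by fun_prop
  hasDerivAt_angle := hα
  hasDerivAt_factor := hN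
  factor_ne_zero := hN0
  one_sub_eventuallyEq := .of_forall fun s => one_sub_ofReal_mul_exp_eq (hre s) (him s)

end SineCurve

/-! ### The cubed log-sine integral -/

section LogSine

variable {ψ : ℝ}

theorem polarCurveAt_sub_pi_div_two (hψ : ψ ∈ Ioo 0 (Real.pi / 2)) (hψ' : ψ ≠ Real.pi / 6) :
    PolarCurveAt (fun s => 2 * Real.sin s) (fun s => s - Real.pi / 2) (fun _ => 1) 1 2 0 ψ := by
  refine .two_mul_sin hψ hψ' ((hasDerivAt_id ψ).sub_const _) (hasDerivAt_const ψ 1) one_ne_zero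
    (fun s => ?_) fun s => ?_
  · rw [Real.cos_sub_pi_div_two, Real.cos_two_mul']
    linear_combination -Real.sin_sq_add_cos_sq s
  · rw [Real.sin_sub_pi_div_two, Real.sin_two_mul]
    ring

theorem svPolylog_two_sub_pi_div_two : ∀ ψ ∈ Icc 0 (Real.pi / 2),
    svPolylog 2 (2 * Real.sin ψ) (ψ - Real.pi / 2) + svPolylog 2 1 (2 * ψ) = 0 := by
  refine eq_of_hasDerivAt_zero_off_countable (countable_singleton (Real.pi / 6)) ?_
    ((continuousOn_svPolylog_two_mul_sin le_rfl (by fun_prop)).add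
      (continuous_svPolylog_one le_rfl (by fun_prop)).continuousOn) fun y hy => ?_
  · simp [svPolylog_zero_left, svPolylog_zero_right_of_even]
  · have hsin : Real.sin (2 * y / 2) ≠ 0 := by
      rw [mul_div_cancel_left₀ y two_ne_zero]
      exact (sin_pos_of_mem_Ioo_pi_div_two hy.1).ne'
    refine ((polarCurveAt_sub_pi_div_two hy.1 hy.2).hasDerivAt_svPolylog_two.add
      (hasDerivAt_svPolylog_two_unitCircle ((hasDerivAt_id y).const_mul 2) hsin)).congr_deriv ?_
    simp

theorem svPolylog_three_sub_pi_div_two : ∀ ψ ∈ Icc 0 (Real.pi / 2),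
    svPolylog 3 (2 * Real.sin ψ) (ψ - Real.pi / 2) + svPolylog 3 1 (2 * ψ) / 2 =
      zeta 3 / 2 := by
  refine eq_of_hasDerivAt_zero_off_countable (countable_singleton (Real.pi / 6)) ?_
    ((continuousOn_svPolylog_two_mul_sin (by norm_num) (by fun_prop)).add
      ((continuous_svPolylog_one (by norm_num) (by fun_prop)).div_const _).continuousOn)
    fun y hy => ?_
  · simp [svPolylog_zero_left, svPolylog_three_one_zero]
  · refine ((polarCurveAt_sub_pi_div_two hy.1 hy.2).hasDerivAt_svPolylog_three.add
      ((hasDerivAt_svPolylog_succ_unitCircle le_rfl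
        ((hasDerivAt_id y).const_mul 2)).div_const 2)).congr_deriv ?_
    simp only [id]
    linear_combination svPolylog_two_sub_pi_div_two y (Ioo_subset_Icc_self hy.1)

/-- The antiderivative of `log ^ 3 (2 sin ψ)` that vanishes at `0`, in terms of polylogarithms. -/
noncomputable def logSineCubeIntegral (ψ : ℝ) : ℝ :=
  3 * svPolylog 4 (2 * Real.sin ψ) (ψ - Real.pi / 2) + 3 / 4 * svPolylog 4 1 (2 * ψ) -
    3 / 2 * zeta 3 * ψ

theorem continuousOn_logSineCubeIntegral :
    ContinuousOn logSineCubeIntegral (Icc 0 (Real.pi / 2)) := by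
  have hsin := continuousOn_svPolylog_two_mul_sin (n := 4) (α := fun ψ => ψ - Real.pi / 2)
    (by norm_num) (by fun_prop)
  have hone := continuous_svPolylog_one (n := 4) (α := fun ψ => 2 * ψ) (by norm_num) (by fun_prop)
  exact ((hsin.const_mul 3).add (hone.const_mul _).continuousOn).sub
    (continuous_const.mul continuous_id).continuousOn

theorem hasDerivAt_logSineCubeIntegral (hψ : ψ ∈ Ioo 0 (Real.pi / 2)) (hψ' : ψ ≠ Real.pi / 6) :
    HasDerivAt logSineCubeIntegral (Real.log (2 * Real.sin ψ) ^ 3) ψ := by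
  refine ((((polarCurveAt_sub_pi_div_two hψ hψ').hasDerivAt_svPolylog_four.const_mul 3).add
    ((hasDerivAt_svPolylog_succ_unitCircle (n := 3) (by norm_num)
      ((hasDerivAt_id ψ).const_mul 2)).const_mul (3 / 4))).sub
    ((hasDerivAt_id ψ).const_mul (3 / 2 * zeta 3))).congr_deriv ?_
  simp only [id]
  linear_combination 3 * svPolylog_three_sub_pi_div_two ψ (Ioo_subset_Icc_self hψ)

theorem logSineCubeIntegral_zero : logSineCubeIntegral 0 = 0 := by
  simp [logSineCubeIntegral, svPolylog_zero_left, svPolylog_zero_right_of_even (n := 4) (by decide)]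

theorem logSineCubeIntegral_pi_div_two :
    logSineCubeIntegral (Real.pi / 2) = -(3 / 4) * (Real.pi * zeta 3) := by
  have h4 : Even 4 := by decide
  rw [logSineCubeIntegral, sub_self, mul_div_cancel₀ Real.pi two_ne_zero,
    svPolylog_zero_right_of_even h4, svPolylog_pi_of_even h4]
  ring

theorem logSineCubeIntegral_pi_div_six :
    logSineCubeIntegral (Real.pi / 6) =
      -(9 / 4) * svPolylog 4 1 (Real.pi / 3) - Real.pi * zeta 3 / 4 := by
  rw [logSineCubeIntegral, two_mul_sin_pi_div_six,
    show Real.pi / 6 - Real.pi / 2 = -(Real.pi / 3) by ring, svPolylog_neg_right,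
    show 2 * (Real.pi / 6) = Real.pi / 3 by ring]
  ring

end LogSine

/-! ### The cubed log-tangent integral -/

section LogTan

variable {θ : ℝ}

/-- The antiderivative of `log ^ 3 (tan θ)` on `[0, π / 4]` that vanishes at `0`. -/
noncomputable def logTanCubeIntegral (θ : ℝ) : ℝ :=
  -6 * svPolylog 4 (Real.tan θ) (Real.pi / 2)

theorem polarCurveAt_tan (hθ : θ ∈ Ioo 0 (Real.pi / 4)) :
    PolarCurveAt Real.tan (fun _ => Real.pi / 2) (fun s => (Real.cos s)⁻¹) 0 (-1)
      (-(-Real.sin θ) / Real.cos θ ^ 2) θ := by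
  have hlt : θ < Real.pi / 2 := by linarith [hθ.1, hθ.2]
  have hcos : Real.cos θ ≠ 0 := (cos_pos_of_mem_Ico_pi_div_two ⟨hθ.1.le, hlt⟩).ne'
  have htan : Real.tan θ < 1 := by
    rw [← Real.tan_pi_div_four]
    exact Real.tan_lt_tan_of_lt_of_lt_pi_div_two (by linarith [hθ.1, hlt])
      (by linarith [Real.pi_pos]) hθ.2
  refine ⟨Real.tan_pos_of_pos_of_lt_pi_div_two hθ.1 hlt, htan.ne,
    (Real.hasDerivAt_tan hcos).differentiableAt, hasDerivAt_const _ _,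
    (Real.hasDerivAt_cos θ).fun_inv hcos, inv_ne_zero hcos, ?_⟩
  filter_upwards [Real.continuous_cos.continuousAt.eventually_ne hcos] with s hs
  refine one_sub_ofReal_mul_exp_eq ?_ ?_
  · rw [Real.cos_pi_div_two, neg_one_mul, Real.cos_neg, inv_mul_cancel₀ hs, mul_zero, sub_zero]
  · rw [Real.sin_pi_div_two, neg_one_mul, Real.sin_neg, Real.tan_eq_sin_div_cos]
    ring

theorem hasDerivAt_logTanCubeIntegral (hθ : θ ∈ Ioo 0 (Real.pi / 4)) :
    HasDerivAt logTanCubeIntegral (Real.log (Real.tan θ) ^ 3) θ :=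
  ((polarCurveAt_tan hθ).hasDerivAt_svPolylog_four.const_mul (-6)).congr_deriv (by ring)

theorem continuousOn_logTanCubeIntegral :
    ContinuousOn logTanCubeIntegral (Ico 0 (Real.pi / 2)) := by
  have htan : ContinuousOn Real.tan (Ico 0 (Real.pi / 2)) :=
    Real.continuousOn_tan.mono fun θ hθ => (cos_pos_of_mem_Ico_pi_div_two hθ).ne'
  exact continuousOn_const.mul ((continuousOn_svPolylog (n := 4) (by norm_num)).comp
    (f := fun θ => (Real.tan θ, Real.pi / 2)) (htan.prodMk continuousOn_const)
    fun θ hθ => ⟨Real.tan_nonneg_of_nonneg_of_le_pi_div_two hθ.1 hθ.2.le, trivial⟩)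

theorem logTanCubeIntegral_zero : logTanCubeIntegral 0 = 0 := by
  simp [logTanCubeIntegral, svPolylog_zero_left]

end LogTan

/-! ### Triplication along the curve `r = 2 sin ψ` -/

section Triplication

variable {ψ : ℝ}

theorem two_mul_cos_add_mul_two_mul_cos_sub (ψ : ℝ) :
    2 * Real.cos (ψ + Real.pi / 3) * (2 * Real.cos (ψ - Real.pi / 3)) =
      1 - 4 * Real.sin ψ ^ 2 := by
  have h3 : √3 ^ 2 = (3 : ℝ) := Real.sq_sqrt (by norm_num)
  rw [Real.cos_add, Real.cos_sub, Real.cos_pi_div_three, Real.sin_pi_div_three]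
  linear_combination -Real.sin ψ ^ 2 * h3 + Real.sin_sq_add_cos_sq ψ

theorem two_mul_cos_add_pi_div_three_ne_zero (hψ : ψ ∈ Ioo 0 (Real.pi / 2))
    (hψ' : ψ ≠ Real.pi / 6) :
    2 * Real.cos (ψ + Real.pi / 3) ≠ 0 ∧ 2 * Real.cos (ψ - Real.pi / 3) ≠ 0 := by
  rw [← mul_ne_zero_iff, two_mul_cos_add_mul_two_mul_cos_sub,
    show 1 - 4 * Real.sin ψ ^ 2 = (1 - 2 * Real.sin ψ) * (1 + 2 * Real.sin ψ) by ring]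
  exact mul_ne_zero (sub_ne_zero.2 (two_mul_sin_ne_one hψ hψ').symm)
    (by linarith [sin_pos_of_mem_Ioo_pi_div_two hψ])

theorem sin_three_mul_add_pi_div_two (ψ : ℝ) :
    Real.sin (3 * ψ + Real.pi / 2) = Real.sin (ψ + Real.pi / 2) *
      (2 * Real.cos (ψ + Real.pi / 3) * (2 * Real.cos (ψ - Real.pi / 3))) := by
  rw [two_mul_cos_add_mul_two_mul_cos_sub, Real.sin_add_pi_div_two, Real.sin_add_pi_div_two,
    Real.cos_three_mul, Real.sin_sq]
  ring

theorem hasDerivAt_two_mul_cos_add (c ψ : ℝ) :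
    HasDerivAt (fun s => 2 * Real.cos (s + c)) (-2 * Real.sin (ψ + c)) ψ :=
  (((hasDerivAt_id ψ).add_const c).cos.const_mul 2).congr_deriv (by simp)

theorem polarCurveAt_sub_pi_div_six (hψ : ψ ∈ Ioo 0 (Real.pi / 2)) (hψ' : ψ ≠ Real.pi / 6) :
    PolarCurveAt (fun s => 2 * Real.sin s) (fun s => s - Real.pi / 6)
      (fun s => 2 * Real.cos (s + Real.pi / 3)) 1 1 (-2 * Real.sin (ψ + Real.pi / 3)) ψ := by
  refine .two_mul_sin hψ hψ' ((hasDerivAt_id ψ).sub_const _) (hasDerivAt_two_mul_cos_add _ ψ)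
    (two_mul_cos_add_pi_div_three_ne_zero hψ hψ').1 (fun s => ?_) fun s => ?_
  · rw [Real.cos_sub, Real.cos_add, Real.cos_pi_div_six, Real.sin_pi_div_six,
      Real.cos_pi_div_three, Real.sin_pi_div_three, one_mul]
    linear_combination -Real.sin_sq_add_cos_sq s
  · rw [Real.sin_sub, Real.cos_add, Real.cos_pi_div_six, Real.sin_pi_div_six,
      Real.cos_pi_div_three, Real.sin_pi_div_three, one_mul]
    ring

theorem polarCurveAt_sub_five_pi_div_six (hψ : ψ ∈ Ioo 0 (Real.pi / 2))
    (hψ' : ψ ≠ Real.pi / 6) :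
    PolarCurveAt (fun s => 2 * Real.sin s) (fun s => s - 5 * Real.pi / 6)
      (fun s => 2 * Real.cos (s - Real.pi / 3)) 1 1 (-2 * Real.sin (ψ - Real.pi / 3)) ψ := by
  have hcos : Real.cos (5 * Real.pi / 6) = -(√3 / 2) := by
    rw [show 5 * Real.pi / 6 = Real.pi - Real.pi / 6 by ring, Real.cos_pi_sub, Real.cos_pi_div_six]
  have hsin : Real.sin (5 * Real.pi / 6) = 1 / 2 := by
    rw [show 5 * Real.pi / 6 = Real.pi - Real.pi / 6 by ring, Real.sin_pi_sub, Real.sin_pi_div_six]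
  refine .two_mul_sin hψ hψ' ((hasDerivAt_id ψ).sub_const _)
    (hasDerivAt_two_mul_cos_add (-(Real.pi / 3)) ψ)
    (two_mul_cos_add_pi_div_three_ne_zero hψ hψ').2 (fun s => ?_) fun s => ?_
  · rw [Real.cos_sub, Real.cos_sub, hcos, hsin, Real.cos_pi_div_three, Real.sin_pi_div_three,
      one_mul]
    linear_combination -Real.sin_sq_add_cos_sq s
  · rw [Real.sin_sub, Real.cos_sub, hcos, hsin, Real.cos_pi_div_three, Real.sin_pi_div_three,
      one_mul]
    ring

theorem polarCurveAt_three_mul_sub_pi_div_two (hψ : ψ ∈ Ioo 0 (Real.pi / 2))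
    (hψ' : ψ ≠ Real.pi / 6) :
    PolarCurveAt (fun s => 2 * Real.sin s) (fun s => 3 * s - Real.pi / 2)
      (fun s => 2 * Real.cos (s + Real.pi / 3) * (2 * Real.cos (s - Real.pi / 3))) 3 2
      (-2 * Real.sin (ψ + Real.pi / 3) * (2 * Real.cos (ψ - Real.pi / 3)) +
        2 * Real.cos (ψ + Real.pi / 3) * (-2 * Real.sin (ψ - Real.pi / 3))) ψ := by
  refine .two_mul_sin hψ hψ' ((((hasDerivAt_id ψ).const_mul 3).sub_const _).congr_deriv (by simp))
    ((hasDerivAt_two_mul_cos_add _ ψ).mul (hasDerivAt_two_mul_cos_add (-(Real.pi / 3)) ψ))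
    (mul_ne_zero_iff.2 (two_mul_cos_add_pi_div_three_ne_zero hψ hψ')) (fun s => ?_) fun s => ?_
  · rw [Real.cos_sub_pi_div_two, two_mul_cos_add_mul_two_mul_cos_sub, Real.sin_three_mul,
      Real.cos_two_mul, Real.cos_sq']
    ring
  · rw [Real.sin_sub_pi_div_two, two_mul_cos_add_mul_two_mul_cos_sub, Real.cos_three_mul,
      Real.sin_two_mul]
    linear_combination 8 * Real.sin s * Real.cos s * Real.sin_sq_add_cos_sq s

/-- The combination of `svPolylog n` that triplication collapses: its six terms move with angular
velocities `3`, `1`, `1` along the curve of radius `2 sin ψ` and `2`, `6`, `2` on the unit circle,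
and each coefficient scales with `n` so that differentiation lowers the weight. -/
noncomputable def triplicationSum (n : ℕ) (ψ : ℝ) : ℝ :=
  81 / 3 ^ n * svPolylog n (2 * Real.sin ψ) (3 * ψ - Real.pi / 2) -
    3 * svPolylog n (2 * Real.sin ψ) (ψ - Real.pi / 6) -
    3 * svPolylog n (2 * Real.sin ψ) (ψ - 5 * Real.pi / 6) +
    24 / 2 ^ n * svPolylog n 1 (2 * ψ) - 144 / 6 ^ n * svPolylog n 1 (6 * ψ + Real.pi) +
    48 / 2 ^ n * svPolylog n 1 (2 * ψ + Real.pi)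

theorem continuousOn_triplicationSum {n : ℕ} (hn : 2 ≤ n) :
    ContinuousOn (triplicationSum n) (Icc 0 (Real.pi / 2)) := by
  have hcurve {α : ℝ → ℝ} (hα : Continuous α) (c : ℝ) :=
    (continuousOn_svPolylog_two_mul_sin hn hα).const_mul c
  have hcircle {α : ℝ → ℝ} (hα : Continuous α) (c : ℝ) :=
    ((continuous_svPolylog_one hn hα).const_mul c).continuousOn (s := Icc 0 (Real.pi / 2))
  exact (((((hcurve (by fun_prop) (81 / 3 ^ n)).sub (hcurve (by fun_prop) 3)).sub
    (hcurve (by fun_prop) 3)).add (hcircle (by fun_prop) (24 / 2 ^ n))).sub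
    (hcircle (by fun_prop) (144 / 6 ^ n))).add (hcircle (by fun_prop) (48 / 2 ^ n))

theorem triplicationSum_zero_of_even {n : ℕ} (hn : Even (n + 1)) :
    triplicationSum (n + 1) 0 = 0 := by
  simp [triplicationSum, svPolylog_zero_left, svPolylog_zero_right_of_even hn,
    svPolylog_pi_of_even hn]

theorem triplicationSum_two_eq_zero : ∀ ψ ∈ Icc 0 (Real.pi / 2), triplicationSum 2 ψ = 0 := by
  refine eq_of_hasDerivAt_zero_off_countable (countable_singleton (Real.pi / 6))
    (triplicationSum_zero_of_even (by decide)) (continuousOn_triplicationSum le_rfl) fun y hy => ?_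
  have hN := two_mul_cos_add_pi_div_three_ne_zero hy.1 hy.2
  have hsin : Real.sin (2 * y / 2) ≠ 0 := by
    rw [mul_div_cancel_left₀ y two_ne_zero]
    exact (sin_pos_of_mem_Ioo_pi_div_two hy.1).ne'
  have hsin2 : 2 * Real.sin (y + Real.pi / 2) ≠ 0 := by
    rw [Real.sin_add_pi_div_two]
    exact (mul_pos two_pos (cos_pos_of_mem_Ico_pi_div_two (Ioo_subset_Ico_self hy.1))).ne'
  have h6 : (6 * y + Real.pi) / 2 = 3 * y + Real.pi / 2 := by ring
  have h2 : (2 * y + Real.pi) / 2 = y + Real.pi / 2 := by ring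
  have hangle (m : ℝ) := (hasDerivAt_id y).const_mul m
  refine ((((((polarCurveAt_three_mul_sub_pi_div_two hy.1 hy.2).hasDerivAt_svPolylog_two.const_mul
    _).sub ((polarCurveAt_sub_pi_div_six hy.1 hy.2).hasDerivAt_svPolylog_two.const_mul _)).sub
    ((polarCurveAt_sub_five_pi_div_six hy.1 hy.2).hasDerivAt_svPolylog_two.const_mul _)).add
    ((hasDerivAt_svPolylog_two_unitCircle (hangle 2) hsin).const_mul _)).sub
    ((hasDerivAt_svPolylog_two_unitCircle ((hangle 6).add_const Real.pi) ?_).const_mul _)).add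
    ((hasDerivAt_svPolylog_two_unitCircle ((hangle 2).add_const Real.pi) ?_).const_mul _)
      |>.congr_deriv ?_
  · rw [id, h6, sin_three_mul_add_pi_div_two]
    exact mul_ne_zero (right_ne_zero_of_mul hsin2) (mul_ne_zero hN.1 hN.2)
  · rw [id, h2]
    exact right_ne_zero_of_mul hsin2
  · simp only [id, h6, h2]
    rw [sin_three_mul_add_pi_div_two, ← mul_assoc 2, Real.log_mul hsin2 (mul_ne_zero hN.1 hN.2),
      Real.log_mul hN.1 hN.2, mul_div_cancel_left₀ y two_ne_zero]
    ring

theorem hasDerivAt_triplicationSum_three (hψ : ψ ∈ Ioo 0 (Real.pi / 2)) (hψ' : ψ ≠ Real.pi / 6) :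
    HasDerivAt (triplicationSum 3) (triplicationSum 2 ψ) ψ := by
  have hN := two_mul_cos_add_pi_div_three_ne_zero hψ hψ'
  have hangle (m : ℝ) := (hasDerivAt_id ψ).const_mul m
  have hone {α : ℝ → ℝ} {m : ℝ} (hα : HasDerivAt α m ψ) (c : ℝ) :=
    (hasDerivAt_svPolylog_succ_unitCircle (n := 2) le_rfl hα).const_mul c
  refine ((((((polarCurveAt_three_mul_sub_pi_div_two hψ hψ').hasDerivAt_svPolylog_three.const_mul
    _).sub ((polarCurveAt_sub_pi_div_six hψ hψ').hasDerivAt_svPolylog_three.const_mul _)).sub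
    ((polarCurveAt_sub_five_pi_div_six hψ hψ').hasDerivAt_svPolylog_three.const_mul _)).add
    (hone (hangle 2) _)).sub (hone ((hangle 6).add_const Real.pi) _)).add
    (hone ((hangle 2).add_const Real.pi) _) |>.congr_deriv ?_
  rw [add_div, mul_div_mul_right _ _ hN.2, mul_div_mul_left _ _ hN.1, triplicationSum]
  simp only [id]
  ring

theorem hasDerivAt_triplicationSum_four (hψ : ψ ∈ Ioo 0 (Real.pi / 2)) (hψ' : ψ ≠ Real.pi / 6) :
    HasDerivAt (triplicationSum 4)
      (triplicationSum 3 ψ - 2 / 3 * Real.log (2 * Real.sin ψ) ^ 3) ψ := by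
  have hangle (m : ℝ) := (hasDerivAt_id ψ).const_mul m
  have hone {α : ℝ → ℝ} {m : ℝ} (hα : HasDerivAt α m ψ) (c : ℝ) :=
    (hasDerivAt_svPolylog_succ_unitCircle (n := 3) (by norm_num) hα).const_mul c
  refine ((((((polarCurveAt_three_mul_sub_pi_div_two hψ hψ').hasDerivAt_svPolylog_four.const_mul
    _).sub ((polarCurveAt_sub_pi_div_six hψ hψ').hasDerivAt_svPolylog_four.const_mul _)).sub
    ((polarCurveAt_sub_five_pi_div_six hψ hψ').hasDerivAt_svPolylog_four.const_mul _)).add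
    (hone (hangle 2) _)).sub (hone ((hangle 6).add_const Real.pi) _)).add
    (hone ((hangle 2).add_const Real.pi) _) |>.congr_deriv ?_
  rw [triplicationSum]
  simp only [id]
  ring

theorem triplicationSum_three_eq : ∀ ψ ∈ Icc 0 (Real.pi / 2), triplicationSum 3 ψ = -zeta 3 := by
  refine eq_of_hasDerivAt_zero_off_countable (countable_singleton (Real.pi / 6)) ?_
    (continuousOn_triplicationSum (by norm_num)) fun y hy => ?_
  · simp only [triplicationSum, Real.sin_zero, mul_zero, svPolylog_zero_left, zero_add,
      svPolylog_three_one_zero, svPolylog_three_one_pi]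
    ring
  · exact (hasDerivAt_triplicationSum_three hy.1 hy.2).congr_deriv
      (triplicationSum_two_eq_zero y (Ioo_subset_Icc_self hy.1))

theorem triplicationSum_four_add : ∀ ψ ∈ Icc 0 (Real.pi / 2),
    triplicationSum 4 ψ + 2 / 3 * logSineCubeIntegral ψ + zeta 3 * ψ = 0 := by
  refine eq_of_hasDerivAt_zero_off_countable (countable_singleton (Real.pi / 6)) ?_
    (((continuousOn_triplicationSum (by norm_num)).add
      (continuousOn_logSineCubeIntegral.const_mul _)).add (continuousOn_id.const_mul _))
    fun y hy => ?_
  · simp [triplicationSum_zero_of_even (n := 3) (by decide), logSineCubeIntegral_zero]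
  · refine (((hasDerivAt_triplicationSum_four hy.1 hy.2).add
      ((hasDerivAt_logSineCubeIntegral hy.1 hy.2).const_mul _)).add
      ((hasDerivAt_id y).const_mul _)).congr_deriv ?_
    rw [triplicationSum_three_eq y (Ioo_subset_Icc_self hy.1)]
    ring

/-! ### Special values of the log-tangent integral -/

theorem logTanCubeIntegral_pi_div_six :
    logTanCubeIntegral (Real.pi / 6) = 5 / 2 * logSineCubeIntegral (Real.pi / 3) -
      7 / 2 * svPolylog 4 1 (Real.pi / 3) + 5 / 4 * (Real.pi * zeta 3) := by
  have hpi := Real.pi_pos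
  have h4 : Even 4 := by decide
  have hr : 2 * Real.sin (Real.pi / 3) = √3 := by rw [Real.sin_pi_div_three]; ring
  have htan : svPolylog 4 (Real.tan (Real.pi / 6)) (Real.pi / 2) =
      svPolylog 4 √3 (Real.pi / 2) := by
    rw [Real.tan_pi_div_six, one_div, svPolylog_inv_of_even h4 (by positivity)]
  have htrip := triplicationSum_four_add (Real.pi / 3) ⟨by positivity, by linarith⟩
  rw [triplicationSum, hr, show 3 * (Real.pi / 3) - Real.pi / 2 = Real.pi / 2 by ring,
    show Real.pi / 3 - Real.pi / 6 = Real.pi / 6 by ring,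
    show Real.pi / 3 - 5 * Real.pi / 6 = -(Real.pi / 2) by ring,
    show 6 * (Real.pi / 3) + Real.pi = Real.pi + 2 * Real.pi by ring,
    show 2 * (Real.pi / 3) + Real.pi = 2 * Real.pi - Real.pi / 3 by ring, svPolylog_neg_right,
    svPolylog_periodic, svPolylog_two_pi_sub, svPolylog_pi_of_even h4,
    svPolylog_four_one_two_pi_div_three] at htrip
  have hE : logSineCubeIntegral (Real.pi / 3) = -(3 * svPolylog 4 √3 (Real.pi / 6)) +
      2 / 3 * svPolylog 4 1 (Real.pi / 3) - Real.pi * zeta 3 / 2 := by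
    rw [logSineCubeIntegral, hr, show Real.pi / 3 - Real.pi / 2 = -(Real.pi / 6) by ring,
      svPolylog_neg_right, svPolylog_four_one_two_pi_div_three]
    ring
  rw [logTanCubeIntegral, htan]
  linarith

theorem four_mul_sin_mul_cos_pi_div_twelve :
    4 * Real.sin (Real.pi / 12) * Real.cos (Real.pi / 12) = 1 := by
  have h := Real.sin_two_mul (Real.pi / 12)
  rw [show 2 * (Real.pi / 12) = Real.pi / 6 by ring, Real.sin_pi_div_six] at h
  linarith

theorem two_mul_sin_pi_div_twelve_mem_Ioo : 2 * Real.sin (Real.pi / 12) ∈ Ioo (0 : ℝ) 1 :=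
  two_mul_sin_mem_Ioo ⟨by linarith [Real.pi_pos], by linarith [Real.pi_pos]⟩

theorem tan_pi_div_twelve : Real.tan (Real.pi / 12) = (2 * Real.sin (Real.pi / 12)) ^ 2 := by
  have h := four_mul_sin_mul_cos_pi_div_twelve
  rw [Real.tan_eq_sin_div_cos, div_eq_iff (right_ne_zero_of_mul (h.trans_ne one_ne_zero))]
  linear_combination -Real.sin (Real.pi / 12) * h

theorem svPolylog_two_mul_sin_five_pi_div_twelve {n : ℕ} (hn : Even n) (δ : ℝ) :
    svPolylog n (2 * Real.sin (5 * Real.pi / 12)) δ =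
      svPolylog n (2 * Real.sin (Real.pi / 12)) δ := by
  have hinv : 2 * Real.sin (5 * Real.pi / 12) = (2 * Real.sin (Real.pi / 12))⁻¹ := by
    rw [show 5 * Real.pi / 12 = Real.pi / 2 - Real.pi / 12 by ring, Real.sin_pi_div_two_sub]
    exact eq_inv_of_mul_eq_one_right (by linarith [four_mul_sin_mul_cos_pi_div_twelve])
  rw [hinv, svPolylog_inv_of_even hn two_mul_sin_pi_div_twelve_mem_Ioo.1]

theorem logSineCubeIntegral_pi_div_twelve : logSineCubeIntegral (Real.pi / 12) =
    -(3 * svPolylog 4 (2 * Real.sin (Real.pi / 12)) (5 * Real.pi / 12)) +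
      3 / 4 * svPolylog 4 1 (Real.pi / 6) - Real.pi * zeta 3 / 8 := by
  rw [logSineCubeIntegral, show Real.pi / 12 - Real.pi / 2 = -(5 * Real.pi / 12) by ring,
    svPolylog_neg_right, show 2 * (Real.pi / 12) = Real.pi / 6 by ring]
  ring

theorem logSineCubeIntegral_five_pi_div_twelve : logSineCubeIntegral (5 * Real.pi / 12) =
    -(3 * svPolylog 4 (2 * Real.sin (Real.pi / 12)) (Real.pi / 12)) +
      3 / 4 * svPolylog 4 1 (5 * Real.pi / 6) - 5 * (Real.pi * zeta 3) / 8 := by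
  rw [logSineCubeIntegral, svPolylog_two_mul_sin_five_pi_div_twelve (by decide),
    show 5 * Real.pi / 12 - Real.pi / 2 = -(Real.pi / 12) by ring, svPolylog_neg_right,
    show 2 * (5 * Real.pi / 12) = 5 * Real.pi / 6 by ring]
  ring

theorem triplicationSum_four_pi_div_twelve : triplicationSum 4 (Real.pi / 12) =
    -svPolylog 4 (2 * Real.sin (Real.pi / 12)) (Real.pi / 4) +
      3 * svPolylog 4 (2 * Real.sin (Real.pi / 12)) (Real.pi / 12) +
      3 * svPolylog 4 (2 * Real.sin (Real.pi / 12)) (3 * Real.pi / 4) +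
      3 / 2 * svPolylog 4 1 (Real.pi / 6) + 1 / 9 * dirichletBeta 4 -
      3 * svPolylog 4 1 (5 * Real.pi / 6) := by
  rw [triplicationSum, show 3 * (Real.pi / 12) - Real.pi / 2 = -(Real.pi / 4) by ring,
    show Real.pi / 12 - Real.pi / 6 = -(Real.pi / 12) by ring,
    show Real.pi / 12 - 5 * Real.pi / 6 = -(3 * Real.pi / 4) by ring,
    show 2 * (Real.pi / 12) = Real.pi / 6 by ring,
    show 6 * (Real.pi / 12) + Real.pi = 2 * Real.pi - Real.pi / 2 by ring,
    show Real.pi / 6 + Real.pi = 2 * Real.pi - 5 * Real.pi / 6 by ring]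
  simp only [svPolylog_neg_right, svPolylog_two_pi_sub, svPolylog_four_one_pi_div_two]
  ring

theorem triplicationSum_four_five_pi_div_twelve : triplicationSum 4 (5 * Real.pi / 12) =
    svPolylog 4 (2 * Real.sin (Real.pi / 12)) (3 * Real.pi / 4) -
      3 * svPolylog 4 (2 * Real.sin (Real.pi / 12)) (Real.pi / 4) +
      3 * svPolylog 4 (2 * Real.sin (Real.pi / 12)) (5 * Real.pi / 12) +
      3 / 2 * svPolylog 4 1 (5 * Real.pi / 6) + 1 / 9 * dirichletBeta 4 -
      3 * svPolylog 4 1 (Real.pi / 6) := by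
  rw [triplicationSum, show 3 * (5 * Real.pi / 12) - Real.pi / 2 = 3 * Real.pi / 4 by ring,
    show 5 * Real.pi / 12 - Real.pi / 6 = Real.pi / 4 by ring,
    show 5 * Real.pi / 12 - 5 * Real.pi / 6 = -(5 * Real.pi / 12) by ring,
    show 2 * (5 * Real.pi / 12) = 5 * Real.pi / 6 by ring,
    show 6 * (5 * Real.pi / 12) + Real.pi = 2 * Real.pi - Real.pi / 2 + 2 * Real.pi by ring,
    show 5 * Real.pi / 6 + Real.pi = 2 * Real.pi - Real.pi / 6 by ring, svPolylog_periodic]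
  simp only [svPolylog_neg_right, svPolylog_two_pi_sub, svPolylog_four_one_pi_div_two,
    svPolylog_two_mul_sin_five_pi_div_twelve (n := 4) (by decide)]
  ring

theorem logTanCubeIntegral_pi_div_twelve : logTanCubeIntegral (Real.pi / 12) =
    4 * logSineCubeIntegral (Real.pi / 12) + 4 * logSineCubeIntegral (5 * Real.pi / 12) +
      3 * (Real.pi * zeta 3) + 20 / 3 * dirichletBeta 4 := by
  have hpi := Real.pi_pos
  have h1 := triplicationSum_four_add (Real.pi / 12) ⟨by linarith, by linarith⟩
  have h5 := triplicationSum_four_add (5 * Real.pi / 12) ⟨by linarith, by linarith⟩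
  rw [triplicationSum_four_pi_div_twelve] at h1
  rw [triplicationSum_four_five_pi_div_twelve] at h5
  rw [logTanCubeIntegral, tan_pi_div_twelve]
  linarith [svPolylog_four_pi_div_four_sub (Ioo_subset_Icc_self two_mul_sin_pi_div_twelve_mem_Ioo),
    svPolylog_four_one_pi_div_six_add, logSineCubeIntegral_pi_div_twelve,
    logSineCubeIntegral_five_pi_div_twelve]

end Triplication

/-! ### Power series with polynomially bounded coefficients -/

/-- The sum `∑ cₙ xⁿ` of the power series with coefficients `c`; it is used for the generating
functions of `C(2n, n) / 4 ^ n` and of its product with `H_{2n}`. -/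
noncomputable def powerSeriesSum {𝕜 : Type*} [RCLike 𝕜] (c : ℕ → 𝕜) (x : 𝕜) : 𝕜 :=
  ∑' n : ℕ, c n * x ^ n

section powerSeriesSum

variable {𝕜 : Type*} [RCLike 𝕜] {c e : ℕ → 𝕜} {k l : ℕ} {x : 𝕜}

theorem powerSeriesSum_apply_zero (c : ℕ → 𝕜) : powerSeriesSum c 0 = c 0 := by
  rw [powerSeriesSum, tsum_eq_single 0 fun n hn => by simp [hn]]
  simp

theorem summable_mul_pow_of_isBigO (hc : c =O[atTop] fun n : ℕ => (n : ℝ) ^ k)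
    (hx : ‖x‖ < 1) : Summable fun n => c n * x ^ n :=
  summable_of_isBigO_nat (summable_norm_pow_mul_geometric_of_norm_lt_one k hx)
    (by simpa using hc.norm_right.mul (Asymptotics.isBigO_refl (fun n => x ^ n) atTop).norm_right)

theorem isBigO_natCast_mul (hc : c =O[atTop] fun n : ℕ => (n : ℝ) ^ k) :
    (fun n : ℕ => (n : 𝕜) * c n) =O[atTop] fun n : ℕ => (n : ℝ) ^ (k + 1) := by
  have hn : (fun n : ℕ => (n : 𝕜)) =O[atTop] fun n : ℕ => (n : ℝ) :=
    .of_bound 1 (.of_forall fun n => by simp)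
  simpa [pow_succ'] using hn.mul hc

theorem powerSeriesSum_add (hc : c =O[atTop] fun n : ℕ => (n : ℝ) ^ k)
    (he : e =O[atTop] fun n : ℕ => (n : ℝ) ^ l) (hx : ‖x‖ < 1) :
    powerSeriesSum (c + e) x = powerSeriesSum c x + powerSeriesSum e x := by
  simp only [powerSeriesSum, Pi.add_apply, add_mul]
  exact (summable_mul_pow_of_isBigO hc hx).tsum_add (summable_mul_pow_of_isBigO he hx)

theorem powerSeriesSum_eq_add_mul (hc : c =O[atTop] fun n : ℕ => (n : ℝ) ^ k)
    (hx : ‖x‖ < 1) :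
    powerSeriesSum c x = c 0 + x * powerSeriesSum (fun n => c (n + 1)) x := by
  simp only [powerSeriesSum]
  rw [(summable_mul_pow_of_isBigO hc hx).tsum_eq_zero_add, ← tsum_mul_left]
  simp only [pow_zero, mul_one, pow_succ', mul_left_comm]

theorem hasDerivAt_powerSeriesSum (hc : c =O[atTop] fun n : ℕ => (n : ℝ) ^ k)
    (hx : ‖x‖ < 1) :
    HasDerivAt (powerSeriesSum c) (powerSeriesSum (fun n => ((n : 𝕜) + 1) * c (n + 1)) x) x := by
  obtain ⟨ρ, hxρ, hρ⟩ := exists_between hx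
  have hρ0 : 0 < ρ := (norm_nonneg x).trans_lt hxρ
  have hmem : x ∈ Metric.ball (0 : 𝕜) ρ := by simpa using hxρ
  have hbound : Summable fun n : ℕ => ‖(n : 𝕜) * c n‖ * ρ ^ n / ρ :=
    (summable_mul_pow_of_isBigO (isBigO_natCast_mul hc).norm_left
      (by rwa [Real.norm_of_nonneg hρ0.le])).div_const ρ
  have hterm (n : ℕ) {y : 𝕜} (hy : y ∈ Metric.ball (0 : 𝕜) ρ) :
      ‖c n * (n * y ^ (n - 1))‖ ≤ ‖(n : 𝕜) * c n‖ * ρ ^ n / ρ := by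
    rcases n with _ | n
    · simp
    rw [mul_left_comm, ← mul_assoc, norm_mul, norm_pow, Nat.add_sub_cancel, pow_succ, ← mul_assoc,
      mul_div_cancel_right₀ _ hρ0.ne']
    gcongr
    exact (mem_ball_zero_iff.1 hy).le
  have hder := hasDerivAt_tsum_of_isPreconnected hbound Metric.isOpen_ball
    (convex_ball (0 : 𝕜) ρ).isPreconnected (fun n y _ => (hasDerivAt_pow n y).const_mul (c n))
    (fun n y => hterm n) hmem (summable_mul_pow_of_isBigO hc hx) hmem
  refine hder.congr_deriv ?_
  rw [(Summable.of_norm_bounded hbound fun n => hterm n hmem).tsum_eq_zero_add]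
  simp only [Nat.cast_zero, zero_mul, mul_zero, zero_add, Nat.add_sub_cancel, powerSeriesSum]
  exact tsum_congr fun n => by push_cast; ring

theorem hasDerivAt_powerSeriesSum_of_recurrence (hc : c =O[atTop] fun n : ℕ => (n : ℝ) ^ k)
    (he : e =O[atTop] fun n : ℕ => (n : ℝ) ^ l)
    (hrec : ∀ n : ℕ, 2 * (((n : 𝕜) + 1) * c (n + 1)) = (2 * n + 1) * c n + e n) (hx : ‖x‖ < 1) :
    HasDerivAt (powerSeriesSum c)
      ((powerSeriesSum c x + powerSeriesSum e x) / (2 * (1 - x))) x := by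
  refine (hasDerivAt_powerSeriesSum hc hx).congr_deriv ?_
  have hx1 : 1 - x ≠ 0 := fun h => by simp [← sub_eq_zero.1 h] at hx
  have hnc := isBigO_natCast_mul hc
  have hshift := powerSeriesSum_eq_add_mul hnc hx
  simp only [Nat.cast_zero, zero_mul, zero_add, Nat.cast_add, Nat.cast_one] at hshift
  have hsum : 2 * powerSeriesSum (fun n => ((n : 𝕜) + 1) * c (n + 1)) x =
      2 * powerSeriesSum (fun n => n * c n) x + powerSeriesSum c x + powerSeriesSum e x := by
    have hnc' := (summable_mul_pow_of_isBigO hnc hx).mul_left 2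
    have hc' := summable_mul_pow_of_isBigO hc hx
    simp only [powerSeriesSum]
    rw [← tsum_mul_left, ← tsum_mul_left, ← hnc'.tsum_add hc',
      ← (hnc'.add hc').tsum_add (summable_mul_pow_of_isBigO he hx)]
    exact tsum_congr fun n => by linear_combination x ^ n * hrec n
  rw [eq_div_iff (mul_ne_zero two_ne_zero hx1)]
  linear_combination hsum + 2 * hshift

end powerSeriesSum

/-! ### Generating functions of central binomial coefficients -/

theorem H_succ (n : ℕ) : H (n + 1) = H n + 1 / ((n : ℝ) + 1) := Finset.sum_range_succ ..

theorem H_nonneg (n : ℕ) : 0 ≤ H n := Finset.sum_nonneg fun _ _ => by positivity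

theorem H_le (n : ℕ) : H n ≤ n := by
  refine (Finset.sum_le_card_nsmul _ _ 1 fun k _ => ?_).trans (by simp)
  exact div_le_one_of_le₀ (by linarith [k.cast_nonneg (α := ℝ)]) (by positivity)

/-- The coefficient `C(2n, n) / 4 ^ n` of `(1 - x) ^ (-1 / 2)`. -/
noncomputable def invSqrtCoeff (n : ℕ) : ℝ := n.centralBinom / 4 ^ n

/-- The coefficient `C(2n, n) H_{2n} / 4 ^ n` of the generating function that accounts for the
harmonic numbers in the series. -/
noncomputable def harmonicInvSqrtCoeff (n : ℕ) : ℝ := invSqrtCoeff n * H (2 * n)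

theorem invSqrtCoeff_zero : invSqrtCoeff 0 = 1 := by simp [invSqrtCoeff]

theorem invSqrtCoeff_nonneg (n : ℕ) : 0 ≤ invSqrtCoeff n := by unfold invSqrtCoeff; positivity

theorem invSqrtCoeff_le_one (n : ℕ) : invSqrtCoeff n ≤ 1 := by
  refine div_le_one_of_le₀ ?_ (by positivity)
  have h := Nat.choose_le_two_pow (2 * n) n
  rw [pow_mul, ← Nat.centralBinom_eq_two_mul_choose] at h
  exact_mod_cast h

theorem abs_harmonicInvSqrtCoeff_le (n : ℕ) : |harmonicInvSqrtCoeff n| ≤ 2 * n := by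
  have hH : H (2 * n) ≤ 2 * n := by exact_mod_cast H_le (2 * n)
  rw [harmonicInvSqrtCoeff, abs_of_nonneg (mul_nonneg (invSqrtCoeff_nonneg n) (H_nonneg _))]
  calc invSqrtCoeff n * H (2 * n) ≤ 1 * (2 * n) :=
        mul_le_mul (invSqrtCoeff_le_one n) hH (H_nonneg _) zero_le_one
    _ = 2 * n := one_mul _

theorem invSqrtCoeff_recurrence (n : ℕ) :
    2 * (((n : ℝ) + 1) * invSqrtCoeff (n + 1)) = (2 * n + 1) * invSqrtCoeff n := by
  have h : ((n : ℝ) + 1) * (n + 1).centralBinom = 2 * (2 * n + 1) * n.centralBinom := by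
    exact_mod_cast n.succ_mul_centralBinom_succ
  rw [invSqrtCoeff, invSqrtCoeff, pow_succ]
  field_simp
  linarith

theorem harmonicInvSqrtCoeff_recurrence (n : ℕ) :
    2 * (((n : ℝ) + 1) * harmonicInvSqrtCoeff (n + 1)) =
      (2 * n + 1) * harmonicInvSqrtCoeff n + (invSqrtCoeff n + invSqrtCoeff (n + 1)) := by
  have hodd : (2 * (n : ℝ) + 1) ≠ 0 := by positivity
  have heven : (2 * (n : ℝ) + 1 + 1) ≠ 0 := by positivity
  rw [harmonicInvSqrtCoeff, harmonicInvSqrtCoeff, show 2 * (n + 1) = 2 * n + 1 + 1 by ring,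
    H_succ, H_succ]
  push_cast
  field_simp
  linear_combination
    (H (2 * n) * (2 * n + 1) + 1) * (2 * n + 2) * invSqrtCoeff_recurrence n

theorem isBigO_invSqrtCoeff : invSqrtCoeff =O[atTop] fun n : ℕ => (n : ℝ) ^ 0 :=
  .of_bound 1 (.of_forall fun n => by
    simpa [abs_of_nonneg (invSqrtCoeff_nonneg n)] using invSqrtCoeff_le_one n)

theorem isBigO_invSqrtCoeff_succ :
    (fun n => invSqrtCoeff (n + 1)) =O[atTop] fun n : ℕ => (n : ℝ) ^ 0 :=
  .of_bound 1 (.of_forall fun n => by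
    simpa [abs_of_nonneg (invSqrtCoeff_nonneg (n + 1))] using invSqrtCoeff_le_one (n + 1))

theorem isBigO_harmonicInvSqrtCoeff :
    harmonicInvSqrtCoeff =O[atTop] fun n : ℕ => (n : ℝ) ^ 1 :=
  .of_bound 2 (.of_forall fun n => by simpa using abs_harmonicInvSqrtCoeff_le n)

theorem norm_sin_sq_lt_one {θ : ℝ} (hθ : 0 < Real.cos θ) : ‖Real.sin θ ^ 2‖ < 1 := by
  rw [Real.norm_of_nonneg (sq_nonneg _)]
  nlinarith [Real.sin_sq_add_cos_sq θ]

/-- In the variable `x = sin² θ` the factor `cos θ` integrates the equation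
`2 (1 - x) y' = y + ∑ eₙ xⁿ` satisfied by `y = ∑ cₙ xⁿ`. -/
theorem hasDerivAt_powerSeriesSum_sin_sq_mul_cos {c e : ℕ → ℝ} {k l : ℕ} {θ : ℝ}
    (hc : c =O[atTop] fun n : ℕ => (n : ℝ) ^ k) (he : e =O[atTop] fun n : ℕ => (n : ℝ) ^ l)
    (hrec : ∀ n : ℕ, 2 * (((n : ℝ) + 1) * c (n + 1)) = (2 * n + 1) * c n + e n)
    (hθ : 0 < Real.cos θ) :
    HasDerivAt (fun t => powerSeriesSum c (Real.sin t ^ 2) * Real.cos t)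
      (Real.sin θ * powerSeriesSum e (Real.sin θ ^ 2)) θ := by
  have hy := (hasDerivAt_powerSeriesSum_of_recurrence hc he hrec (norm_sin_sq_lt_one hθ)).comp θ
    ((Real.hasDerivAt_sin θ).pow 2)
  refine (hy.mul (Real.hasDerivAt_cos θ)).congr_deriv ?_
  rw [← Real.cos_sq']
  simp only [Function.comp_apply, Pi.pow_apply, Nat.cast_ofNat, pow_one, Nat.add_one_sub_one]
  field_simp
  ring

theorem powerSeriesSum_invSqrtCoeff {θ : ℝ} (hθ : θ ∈ Ico 0 (Real.pi / 2)) :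
    powerSeriesSum invSqrtCoeff (Real.sin θ ^ 2) * Real.cos θ = 1 := by
  have hder {t : ℝ} (ht : t ∈ Icc 0 θ) :
      HasDerivAt (fun t => powerSeriesSum invSqrtCoeff (Real.sin t ^ 2) * Real.cos t) 0 t := by
    refine (hasDerivAt_powerSeriesSum_sin_sq_mul_cos (e := 0) (l := 0) isBigO_invSqrtCoeff
      (Asymptotics.isBigO_zero _ _) (fun n => by simpa using invSqrtCoeff_recurrence n)
      (cos_pos_of_mem_Ico_pi_div_two ⟨ht.1, ht.2.trans_lt hθ.2⟩)).congr_deriv ?_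
    simp [powerSeriesSum]
  refine eq_of_hasDerivAt_zero_off_countable countable_empty ?_
    (fun t ht => (hder ht).continuousAt.continuousWithinAt)
    (fun t ht => hder (Ioo_subset_Icc_self ht.1)) θ (right_mem_Icc.2 hθ.1)
  simp [powerSeriesSum_apply_zero, invSqrtCoeff_zero]

theorem hasDerivAt_log_cos_half_sub_log_cos {θ : ℝ} (hθ : 0 < Real.cos θ)
    (hθ2 : 0 < Real.cos (θ / 2)) :
    HasDerivAt (fun t => 2 * (Real.log (Real.cos (t / 2)) - Real.log (Real.cos t)))
      (2 * Real.tan θ - Real.tan (θ / 2)) θ := by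
  have hhalf := ((hasDerivAt_id θ).div_const 2).cos.log hθ2.ne'
  refine ((hhalf.sub ((Real.hasDerivAt_cos θ).log hθ.ne')).const_mul 2).congr_deriv ?_
  simp only [Real.tan_eq_sin_div_cos, id_eq]
  ring

theorem tan_mul_sin_two_mul {φ : ℝ} (hφ : Real.cos φ ≠ 0) :
    Real.tan φ * Real.sin (2 * φ) = 1 - Real.cos (2 * φ) := by
  rw [Real.tan_eq_sin_div_cos, Real.sin_two_mul, Real.cos_two_mul']
  field_simp
  linear_combination Real.sin_sq_add_cos_sq φ

theorem sin_mul_powerSeriesSum_invSqrtCoeff_add {θ : ℝ} (hθ : θ ∈ Ioo 0 (Real.pi / 2)) :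
    Real.sin θ * powerSeriesSum (invSqrtCoeff + fun n => invSqrtCoeff (n + 1)) (Real.sin θ ^ 2) =
      2 * Real.tan θ - Real.tan (θ / 2) := by
  have hcos := cos_pos_of_mem_Ico_pi_div_two (Ioo_subset_Ico_self hθ)
  have hsin := sin_pos_of_mem_Ioo_pi_div_two hθ
  have hx := norm_sin_sq_lt_one hcos
  have hsum := powerSeriesSum_invSqrtCoeff (Ioo_subset_Ico_self hθ)
  have hshift := powerSeriesSum_eq_add_mul isBigO_invSqrtCoeff hx
  rw [powerSeriesSum_add isBigO_invSqrtCoeff isBigO_invSqrtCoeff_succ hx]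
  rw [invSqrtCoeff_zero] at hshift
  have hhalf : 0 < Real.cos (θ / 2) :=
    cos_pos_of_mem_Ico_pi_div_two ⟨by linarith [hθ.1], by linarith [hθ.1, hθ.2]⟩
  have htan := tan_mul_sin_two_mul hhalf.ne'
  rw [mul_div_cancel₀ θ two_ne_zero] at htan
  refine mul_right_cancel₀ (mul_pos hsin hcos).ne' ?_
  have htan' : Real.tan θ * Real.cos θ = Real.sin θ := Real.tan_mul_cos hcos.ne'
  linear_combination (Real.sin θ ^ 2 + 1) * hsum - Real.cos θ * hshift + Real.cos θ * htan -
    2 * Real.sin θ * htan' - Real.sin_sq_add_cos_sq θ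

theorem powerSeriesSum_harmonicInvSqrtCoeff {θ : ℝ} (hθ : θ ∈ Ico 0 (Real.pi / 2)) :
    powerSeriesSum harmonicInvSqrtCoeff (Real.sin θ ^ 2) * Real.cos θ =
      2 * (Real.log (Real.cos (θ / 2)) - Real.log (Real.cos θ)) := by
  have hder {t : ℝ} (ht : t ∈ Icc 0 θ) :
      HasDerivAt (fun t => powerSeriesSum harmonicInvSqrtCoeff (Real.sin t ^ 2) * Real.cos t -
        2 * (Real.log (Real.cos (t / 2)) - Real.log (Real.cos t)))
        (Real.sin t * powerSeriesSum (invSqrtCoeff + fun n => invSqrtCoeff (n + 1))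
          (Real.sin t ^ 2) - (2 * Real.tan t - Real.tan (t / 2))) t := by
    have h2 : t / 2 ∈ Ico 0 (Real.pi / 2) := ⟨by linarith [ht.1], by linarith [ht.1, ht.2, hθ.2]⟩
    have hcos := cos_pos_of_mem_Ico_pi_div_two ⟨ht.1, ht.2.trans_lt hθ.2⟩
    exact (hasDerivAt_powerSeriesSum_sin_sq_mul_cos isBigO_harmonicInvSqrtCoeff
      (isBigO_invSqrtCoeff.add isBigO_invSqrtCoeff_succ) harmonicInvSqrtCoeff_recurrence hcos).sub
      (hasDerivAt_log_cos_half_sub_log_cos hcos (cos_pos_of_mem_Ico_pi_div_two h2))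
  refine sub_eq_zero.1 (eq_of_hasDerivAt_zero_off_countable countable_empty ?_
    (fun t ht => (hder ht).continuousAt.continuousWithinAt)
    (fun t ht => (hder (Ioo_subset_Icc_self ht.1)).congr_deriv (sub_eq_zero.2 ?_)) θ
    (right_mem_Icc.2 hθ.1))
  · simp [powerSeriesSum_apply_zero, harmonicInvSqrtCoeff, H]
  · exact sin_mul_powerSeriesSum_invSqrtCoeff_add ⟨ht.1.1, ht.1.2.trans hθ.2⟩

/-! ### Polylogarithms of generating functions -/

/-- The coefficients of `z ^ (k + 1)` in `z * ∑ aₙ (z / 2) ^ (2n)`, as a twist for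
`polylogSeries`. -/
noncomputable def evenCoeff (a : ℕ → ℝ) (k : ℕ) : ℂ := if Even k then a (k / 2) / 2 ^ k else 0

section evenCoeff

variable {a : ℕ → ℝ}

theorem evenCoeff_two_mul (a : ℕ → ℝ) (n : ℕ) : evenCoeff a (2 * n) = a n / 4 ^ n := by
  rw [evenCoeff, if_pos (even_two_mul n), Nat.mul_div_cancel_left n two_pos, pow_mul]
  norm_num

theorem evenCoeff_eq_zero {k : ℕ} (hk : k ∉ range (2 * ·)) : evenCoeff a k = 0 :=
  if_neg fun h => hk (h.two_dvd.imp fun _ hn => hn.symm)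

theorem norm_evenCoeff_le_one (ha : ∀ n, |a n| ≤ 4 ^ n) (k : ℕ) : ‖evenCoeff a k‖ ≤ 1 := by
  by_cases hk : k ∈ range (2 * ·)
  · obtain ⟨n, rfl⟩ := hk
    rw [evenCoeff_two_mul, norm_div, Complex.norm_real, Real.norm_eq_abs, norm_pow,
      Complex.norm_ofNat]
    exact div_le_one_of_le₀ (ha n) (by positivity)
  · simp [evenCoeff_eq_zero hk]

theorem polylogSeries_evenCoeff_zero (a : ℕ → ℝ) (s : ℝ) :
    polylogSeries (evenCoeff a) 0 (2 * s) = 2 * s * powerSeriesSum a (s ^ 2) := by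
  have hinj : Function.Injective (2 * · : ℕ → ℕ) := mul_right_injective₀ two_ne_zero
  rw [polylogSeries, powerSeriesSum, ← hinj.tsum_eq fun k hk => ?_, Complex.ofReal_tsum,
    ← tsum_mul_left]
  · refine tsum_congr fun n => ?_
    rw [evenCoeff_two_mul, pow_zero, div_one, pow_succ, pow_mul, mul_pow]
    push_cast
    rw [mul_pow, show (2 : ℂ) ^ 2 = 4 by norm_num]
    field_simp
  · by_contra hk'
    exact hk (by simp [evenCoeff_eq_zero hk'])

/-- The regularised polylogarithm on the segment `z = 2 sin θ`, `0 ≤ θ ≤ π / 6`, for the series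
`∑ aₙ z ^ (2n + 1) / (4 ^ n (2n + 1) ^ m)`. -/
noncomputable def sinePolylog (a : ℕ → ℝ) (m : ℕ) (θ : ℝ) : ℝ :=
  (regPolylog (evenCoeff a) m (2 * Real.sin θ) 0).re

theorem sinePolylog_apply_zero (m : ℕ) : sinePolylog a m 0 = 0 := by
  simp [sinePolylog, regPolylog_zero_left]

theorem hasSum_sinePolylog_pi_div_six (ha : ∀ n, |a n| ≤ 4 ^ n) {m : ℕ} (hm : 2 ≤ m) :
    HasSum (fun n : ℕ => a n / 4 ^ n / (2 * (n : ℝ) + 1) ^ m) (sinePolylog a m (Real.pi / 6)) := by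
  have hinj : Function.Injective (2 * · : ℕ → ℕ) := mul_right_injective₀ two_ne_zero
  have h := Complex.hasSum_re (summable_regPolylog (δ := 0) (norm_evenCoeff_le_one ha) hm
    (right_mem_Icc.2 zero_le_one)).hasSum
  have h' := (hinj.hasSum_iff fun k hk => by simp [evenCoeff_eq_zero hk]).2 h
  rw [sinePolylog, two_mul_sin_pi_div_six]
  refine h'.congr_fun fun n => ?_
  obtain ⟨k, rfl⟩ := Nat.exists_eq_add_of_le' hm
  have hterm : evenCoeff a (2 * n) * polylogWeight (k + 2) (1 ^ (2 * n + 1)) *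
      Complex.exp ((0 : ℝ) * Complex.I) ^ (2 * n + 1) / (((2 * n : ℕ) : ℂ) + 1) ^ (k + 2) =
      (a n / 4 ^ n / (2 * (n : ℝ) + 1) ^ (k + 2) : ℝ) := by
    rw [evenCoeff_two_mul, one_pow, polylogWeight_succ_one, Complex.ofReal_zero, zero_mul,
      Complex.exp_zero, one_pow, mul_one, Complex.ofReal_one, mul_one]
    push_cast
    rfl
  exact ((congrArg Complex.re hterm).trans (Complex.ofReal_re _)).symm

theorem continuousOn_sinePolylog (ha : ∀ n, |a n| ≤ 4 ^ n) {m : ℕ} (hm : 2 ≤ m) :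
    ContinuousOn (sinePolylog a m) (Icc 0 (Real.pi / 6)) :=
  Complex.continuous_re.comp_continuousOn <|
    (continuousOn_regPolylog (norm_evenCoeff_le_one ha) hm).comp
      (f := fun θ => (2 * Real.sin θ, (0 : ℝ))) (by fun_prop)
      fun θ hθ => ⟨two_mul_sin_mem_Icc hθ, trivial⟩

theorem hasDerivAt_sinePolylog (ha : ∀ n, |a n| ≤ 4 ^ n) (m : ℕ) {θ : ℝ}
    (hθ : θ ∈ Ioo 0 (Real.pi / 6)) :
    HasDerivAt (sinePolylog a (m + 1))
      ((-Real.log (2 * Real.sin θ)) ^ m / m.factorial *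
        (2 * (powerSeriesSum a (Real.sin θ ^ 2) * Real.cos θ))) θ := by
  have hr := two_mul_sin_mem_Ioo hθ
  have h := Complex.reCLM.hasFDerivAt.comp_hasDerivAt θ
    (hasDerivAt_regPolylog (norm_evenCoeff_le_one ha) m ((Real.hasDerivAt_sin θ).const_mul 2)
      (hasDerivAt_const θ 0) hr)
  have hsin : Real.sin θ ≠ 0 := by linarith [hr.1]
  have hvalue : ((0 : ℝ) : ℂ) * Complex.I *
        regPolylog (evenCoeff a) m (2 * Real.sin θ) 0 +
      (-Real.log (2 * Real.sin θ) : ℂ) ^ m / (m.factorial : ℂ) *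
        (((2 * Real.cos θ : ℝ) / (2 * Real.sin θ : ℝ) + (0 : ℝ) * Complex.I) *
          polylogSeries (evenCoeff a) 0
            ((2 * Real.sin θ : ℝ) * Complex.exp ((0 : ℝ) * Complex.I))) =
      ((-Real.log (2 * Real.sin θ)) ^ m / m.factorial *
        (2 * (powerSeriesSum a (Real.sin θ ^ 2) * Real.cos θ)) : ℝ) := by
    have hsinC : Complex.sin θ ≠ 0 := by exact_mod_cast hsin
    simp only [Complex.ofReal_zero, zero_mul, zero_add, add_zero, Complex.exp_zero, mul_one]
    rw [Complex.ofReal_mul 2 (Real.sin θ), Complex.ofReal_ofNat, polylogSeries_evenCoeff_zero]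
    push_cast
    field_simp
  exact h.congr_deriv ((congrArg Complex.re hvalue).trans (Complex.ofReal_re _))

end evenCoeff

/-! ### Evaluation of the series -/

theorem two_mul_add_one_le_four_pow (n : ℕ) : 2 * n + 1 ≤ 4 ^ n := by
  induction n with
  | zero => rfl
  | succ n ih => rw [pow_succ]; lia

theorem abs_invSqrtCoeff_le_four_pow (n : ℕ) : |invSqrtCoeff n| ≤ 4 ^ n := by
  rw [abs_of_nonneg (invSqrtCoeff_nonneg n)]
  exact (invSqrtCoeff_le_one n).trans (one_le_pow₀ (by norm_num))

theorem abs_harmonicInvSqrtCoeff_le_four_pow (n : ℕ) : |harmonicInvSqrtCoeff n| ≤ 4 ^ n :=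
  (abs_harmonicInvSqrtCoeff_le n).trans
    (by exact_mod_cast (Nat.le_succ _).trans (two_mul_add_one_le_four_pow n))

/-- Its value at `π / 6` is the series to be summed. -/
noncomputable def binomialPolylog (θ : ℝ) : ℝ :=
  9 * sinePolylog harmonicInvSqrtCoeff 3 θ + 41 * sinePolylog invSqrtCoeff 4 θ

theorem continuousOn_binomialPolylog : ContinuousOn binomialPolylog (Icc 0 (Real.pi / 6)) :=
  ((continuousOn_sinePolylog abs_harmonicInvSqrtCoeff_le_four_pow (by norm_num)).const_mul 9).add
    ((continuousOn_sinePolylog abs_invSqrtCoeff_le_four_pow (by norm_num)).const_mul 41)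

theorem hasDerivAt_binomialPolylog {θ : ℝ} (hθ : θ ∈ Ioo 0 (Real.pi / 6)) :
    HasDerivAt binomialPolylog
      (18 * (Real.log (Real.cos (θ / 2)) - Real.log (Real.cos θ)) *
        Real.log (2 * Real.sin θ) ^ 2 - 41 / 3 * Real.log (2 * Real.sin θ) ^ 3) θ := by
  have hθ2 : θ ∈ Ico 0 (Real.pi / 2) := ⟨hθ.1.le, by linarith [hθ.2, Real.pi_pos]⟩
  refine (((hasDerivAt_sinePolylog abs_harmonicInvSqrtCoeff_le_four_pow 2 hθ).const_mul 9).add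
    ((hasDerivAt_sinePolylog abs_invSqrtCoeff_le_four_pow 3 hθ).const_mul 41)).congr_deriv ?_
  rw [powerSeriesSum_harmonicInvSqrtCoeff hθ2, powerSeriesSum_invSqrtCoeff hθ2]
  simp only [Nat.factorial]
  push_cast
  ring

theorem log_two_mul_sub_log_two_mul {x y : ℝ} (hx : 0 < x) (hy : 0 < y) :
    Real.log (2 * x) - Real.log (2 * y) = Real.log x - Real.log y := by
  rw [← Real.log_div (by positivity) (by positivity), mul_div_mul_left _ _ two_ne_zero,
    Real.log_div hx.ne' hy.ne']

theorem log_tan_eq_sub {x : ℝ} (hx : x ∈ Ioo 0 (Real.pi / 2)) :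
    Real.log (Real.tan x) = Real.log (2 * Real.sin x) - Real.log (2 * Real.cos x) := by
  have hsin := sin_pos_of_mem_Ioo_pi_div_two hx
  have hcos := cos_pos_of_mem_Ico_pi_div_two (Ioo_subset_Ico_self hx)
  rw [log_two_mul_sub_log_two_mul hsin hcos, Real.tan_eq_sin_div_cos,
    Real.log_div hsin.ne' hcos.ne']

theorem log_two_mul_sin_two_mul {x : ℝ} (hx : x ∈ Ioo 0 (Real.pi / 2)) :
    Real.log (2 * Real.sin (2 * x)) = Real.log (2 * Real.sin x) + Real.log (2 * Real.cos x) := by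
  have hsin := sin_pos_of_mem_Ioo_pi_div_two hx
  have hcos := cos_pos_of_mem_Ico_pi_div_two (Ioo_subset_Ico_self hx)
  rw [← Real.log_mul (by positivity) (by positivity), Real.sin_two_mul]
  ring_nf

theorem sum_log_cubes_eq {θ : ℝ} (hθ : θ ∈ Ioo 0 (Real.pi / 2)) :
    3 * Real.log (Real.tan (θ / 2)) ^ 3 + 3 * Real.log (Real.tan θ) ^ 3 -
        12 * Real.log (2 * Real.sin (θ / 2)) ^ 3 + 12 * Real.log (2 * Real.cos (θ / 2)) ^ 3 -
        3 * Real.log (2 * Real.sin (2 * θ)) ^ 3 + 6 * Real.log (2 * Real.cos θ) ^ 3 -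
        14 / 3 * Real.log (2 * Real.sin θ) ^ 3 =
      18 * (Real.log (Real.cos (θ / 2)) - Real.log (Real.cos θ)) *
        Real.log (2 * Real.sin θ) ^ 2 - 41 / 3 * Real.log (2 * Real.sin θ) ^ 3 := by
  have hhalf : θ / 2 ∈ Ioo 0 (Real.pi / 2) := ⟨by linarith [hθ.1], by linarith [hθ.1, hθ.2]⟩
  have hsin := log_two_mul_sin_two_mul hhalf
  rw [mul_div_cancel₀ θ two_ne_zero] at hsin
  rw [log_tan_eq_sub hhalf, log_tan_eq_sub hθ, log_two_mul_sin_two_mul hθ, hsin,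
    ← log_two_mul_sub_log_two_mul (cos_pos_of_mem_Ico_pi_div_two (Ioo_subset_Ico_self hhalf))
      (cos_pos_of_mem_Ico_pi_div_two (Ioo_subset_Ico_self hθ))]
  ring

/-- The combination of log-sine and log-tangent integrals whose derivative is that of
`binomialPolylog`, by `sum_log_cubes_eq`. -/
noncomputable def logTrigCombination (θ : ℝ) : ℝ :=
  6 * logTanCubeIntegral (θ / 2) + 3 * logTanCubeIntegral θ - 24 * logSineCubeIntegral (θ / 2) -
    24 * logSineCubeIntegral (Real.pi / 2 - θ / 2) - 3 / 2 * logSineCubeIntegral (2 * θ) -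
    6 * logSineCubeIntegral (Real.pi / 2 - θ) - 14 / 3 * logSineCubeIntegral θ

theorem continuousOn_logTrigCombination :
    ContinuousOn logTrigCombination (Icc 0 (Real.pi / 6)) := by
  have hsine {g : ℝ → ℝ} (hg : Continuous g)
      (hmaps : MapsTo g (Icc 0 (Real.pi / 6)) (Icc 0 (Real.pi / 2))) (c : ℝ) :=
    (continuousOn_logSineCubeIntegral.comp hg.continuousOn hmaps).const_mul c
  have htan {g : ℝ → ℝ} (hg : Continuous g)
      (hmaps : MapsTo g (Icc 0 (Real.pi / 6)) (Ico 0 (Real.pi / 2))) (c : ℝ) :=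
    (continuousOn_logTanCubeIntegral.comp hg.continuousOn hmaps).const_mul c
  refine ((((((htan (g := (· / 2)) (by fun_prop) ?_ 6).add (htan continuous_id ?_ 3)).sub
    (hsine (g := (· / 2)) (by fun_prop) ?_ 24)).sub
    (hsine (g := fun θ => Real.pi / 2 - θ / 2) (by fun_prop) ?_ 24)).sub
    (hsine (g := (2 * ·)) (by fun_prop) ?_ (3 / 2))).sub
    (hsine (g := (Real.pi / 2 - ·)) (by fun_prop) ?_ 6)).sub
    (hsine continuous_id ?_ (14 / 3))
  all_goals
    rintro θ ⟨h0, h6⟩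
    constructor <;> simp only [id] <;> linarith [Real.pi_pos]

theorem hasDerivAt_logTrigCombination {θ : ℝ} (hθ : θ ∈ Ioo 0 (Real.pi / 6))
    (hθ' : θ ≠ Real.pi / 12) :
    HasDerivAt logTrigCombination
      (18 * (Real.log (Real.cos (θ / 2)) - Real.log (Real.cos θ)) *
        Real.log (2 * Real.sin θ) ^ 2 - 41 / 3 * Real.log (2 * Real.sin θ) ^ 3) θ := by
  obtain ⟨h0, h6⟩ := hθ
  have := Real.pi_pos
  have hsine {g : ℝ → ℝ} {g' : ℝ} (c : ℝ) (hg : HasDerivAt g g' θ)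
      (hgθ : g θ ∈ Ioo 0 (Real.pi / 2) ∧ g θ ≠ Real.pi / 6) :
      HasDerivAt (fun t => c * logSineCubeIntegral (g t))
        (c * (Real.log (2 * Real.sin (g θ)) ^ 3 * g')) θ :=
    ((hasDerivAt_logSineCubeIntegral hgθ.1 hgθ.2).comp θ hg).const_mul c
  have htan {g : ℝ → ℝ} {g' : ℝ} (c : ℝ) (hg : HasDerivAt g g' θ)
      (hgθ : g θ ∈ Ioo 0 (Real.pi / 4)) :
      HasDerivAt (fun t => c * logTanCubeIntegral (g t))
        (c * (Real.log (Real.tan (g θ)) ^ 3 * g')) θ :=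
    ((hasDerivAt_logTanCubeIntegral hgθ).comp θ hg).const_mul c
  have hid := hasDerivAt_id' θ
  have hhalf := hid.div_const 2
  refine ((((((htan 6 hhalf ?_).add (htan 3 hid ?_)).sub
    (hsine 24 hhalf ?_)).sub (hsine 24 (hhalf.const_sub (Real.pi / 2)) ?_)).sub
    (hsine (3 / 2) (hid.const_mul 2) ?_)).sub (hsine 6 (hid.const_sub (Real.pi / 2)) ?_)).sub
    (hsine (14 / 3) hid ?_) |>.congr_deriv ?_
  · exact ⟨by linarith, by linarith⟩
  · exact ⟨h0, by linarith⟩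
  · exact ⟨⟨by linarith, by linarith⟩, by linarith⟩
  · exact ⟨⟨by linarith, by linarith⟩, by linarith⟩
  · exact ⟨⟨by linarith, by linarith⟩, fun h => hθ' (by linarith)⟩
  · exact ⟨⟨by linarith, by linarith⟩, by linarith⟩
  · exact ⟨⟨h0, by linarith⟩, h6.ne⟩
  rw [← sum_log_cubes_eq ⟨h0, by linarith⟩, Real.sin_pi_div_two_sub, Real.sin_pi_div_two_sub]
  ring

theorem binomialPolylog_sub_logTrigCombination :
    ∀ θ ∈ Icc 0 (Real.pi / 6),
      binomialPolylog θ - logTrigCombination θ = -(45 / 2) * (Real.pi * zeta 3) := by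
  refine eq_of_hasDerivAt_zero_off_countable (countable_singleton (Real.pi / 12)) ?_
    (continuousOn_binomialPolylog.sub continuousOn_logTrigCombination) fun θ hθ =>
    ((hasDerivAt_binomialPolylog hθ.1).sub
      (hasDerivAt_logTrigCombination hθ.1 hθ.2)).congr_deriv (sub_self _)
  simp only [binomialPolylog, logTrigCombination, sinePolylog_apply_zero, zero_div, mul_zero,
    sub_zero, logTanCubeIntegral_zero, logSineCubeIntegral_zero, logSineCubeIntegral_pi_div_two]
  ring

theorem logTrigCombination_pi_div_six :
    logTrigCombination (Real.pi / 6) =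
      40 * dirichletBeta 4 + 275 / 12 * (Real.pi * zeta 3) := by
  rw [logTrigCombination, show Real.pi / 6 / 2 = Real.pi / 12 by ring,
    show Real.pi / 2 - Real.pi / 12 = 5 * Real.pi / 12 by ring,
    show Real.pi / 2 - Real.pi / 6 = Real.pi / 3 by ring,
    show 2 * (Real.pi / 6) = Real.pi / 3 by ring, logTanCubeIntegral_pi_div_twelve,
    logTanCubeIntegral_pi_div_six, logSineCubeIntegral_pi_div_six]
  ring

theorem binomialPolylog_pi_div_six :
    binomialPolylog (Real.pi / 6) = 40 * dirichletBeta 4 + 5 * Real.pi * zeta 3 / 12 := by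
  have h := binomialPolylog_sub_logTrigCombination (Real.pi / 6) ⟨by positivity, le_rfl⟩
  rw [logTrigCombination_pi_div_six] at h
  linarith

theorem hasSum_binomialPolylog_pi_div_six :
    HasSum (fun n : ℕ => ((2 * n).choose n : ℝ) / ((2 * (n : ℝ) + 1) ^ 3 * 16 ^ n) *
      (9 * H (2 * n + 1) + 32 / (2 * (n : ℝ) + 1))) (binomialPolylog (Real.pi / 6)) := by
  refine (((hasSum_sinePolylog_pi_div_six abs_harmonicInvSqrtCoeff_le_four_pow
    (by norm_num)).mul_left 9).add ((hasSum_sinePolylog_pi_div_six abs_invSqrtCoeff_le_four_pow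
    (by norm_num)).mul_left 41)).congr_fun fun n => ?_
  have hodd : (2 * (n : ℝ) + 1) ≠ 0 := by positivity
  rw [H_succ, harmonicInvSqrtCoeff, invSqrtCoeff, Nat.centralBinom_eq_two_mul_choose,
    show (16 : ℝ) ^ n = 4 ^ n * 4 ^ n by rw [← mul_pow]; norm_num]
  push_cast
  field_simp
  ring

end

theorem stmt_17 :
    Tendsto (fun N => ∑ n ∈ Finset.range N,
      ((2*n).choose n : ℝ) / ((2*(n:ℝ)+1)^3 * 16^n) *
        (9 * H (2*n+1) + 32 / (2*(n:ℝ)+1)))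
      atTop (𝓝 (40 * dirichletBeta 4 + 5 * Real.pi * zeta 3 / 12)) := by
  rw [← binomialPolylog_pi_div_six]
  exact hasSum_binomialPolylog_pi_div_six.tendsto_sum_nat
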